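/- arXiv:1905.02160 — 3 statements merged into one kernel-verified Lean document; each statement's English description precedes it below -/
import Mathlib

section
/- For every k, r ∈ ℕ with k, r ≥ 1 and every Souslin measurable colouring c : FIN_{±k}^[∞] → {0, …, r−1} (with respect to the metrizable topology on FIN_{±k}^[∞]), there exist i < r and an infinite block sequence P ∈ FIN_{±k}^[∞] such that ⟨P⟩_{±k}^[∞] ⊆ (c⁻¹{i})₁. -/
open Function Set

/-- `p` is an element of `FIN_{±k}`: finitely supported, values in `{0, ±1, …, ±k}`,
attaining one of the values `±k`. -/
def IsFin (k : ℕ) (p : ℕ → ℤ) : Prop :=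
  (Function.support p).Finite ∧ (∀ n, |p n| ≤ (k : ℤ)) ∧ (∃ n, |p n| = (k : ℤ))

/-- `p < q` in the block ordering: every point of `supp p` precedes every point of `supp q`. -/
def BlockLt (p q : ℕ → ℤ) : Prop :=
  ∀ m n : ℕ, p m ≠ 0 → q n ≠ 0 → m < n

/-- The tetris operation `T`. -/
def tetris (p : ℕ → ℤ) : ℕ → ℤ := fun n =>
  if 0 < p n then p n - 1 else if p n < 0 then p n + 1 else 0

/-- The sign-flipped tetris operation `-T`. -/
def negT (p : ℕ → ℤ) : ℕ → ℤ := -(tetris p)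

/-- The weak tetris operation `S`. -/
def Sop (p : ℕ → ℤ) : ℕ → ℤ := fun n => if |p n| = 1 then 0 else p n

/-- `‖p‖ ≤ c` for the `ℓ∞` norm. -/
def normLe (p : ℕ → ℤ) (c : ℕ) : Prop := ∀ n, |p n| ≤ (c : ℤ)

/-- `(A)_c`, the `c`-fattening of `A`. -/
def approx (c : ℕ) (A : Set (ℕ → ℤ)) : Set (ℕ → ℤ) :=
  {p | ∃ q ∈ A, normLe (p - q) c}

/-- `P` is an infinite block sequence in `FIN_{±k}`. -/
def IsBlockSeq (k : ℕ) (P : ℕ → ℕ → ℤ) : Prop :=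
  (∀ n, IsFin k (P n)) ∧ ∀ m n : ℕ, m < n → BlockLt (P m) (P n)

/-- `t` is a finite block sequence in `FIN_{±k}` (coded as a list). -/
def IsFinBlockSeq (k : ℕ) (t : List (ℕ → ℤ)) : Prop :=
  (∀ p ∈ t, IsFin k p) ∧ t.Pairwise BlockLt

/-- `q ∈ ⟨P⟩_{±k}`: `q = ε₀T^{j₀}(p_{n₀}) + ⋯ + ε_m T^{j_m}(p_{n_m})` with `n₀ < ⋯ < n_m`,
`εᵢ ∈ {±1}`, `jᵢ < k` and `min jᵢ = 0`. -/
def InSpanPM (k : ℕ) (P : ℕ → ℕ → ℤ) (q : ℕ → ℤ) : Prop :=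
  ∃ (m : ℕ) (n : Fin (m + 1) → ℕ) (ε : Fin (m + 1) → ℤ) (j : Fin (m + 1) → ℕ),
    StrictMono n ∧ (∀ i, ε i = 1 ∨ ε i = -1) ∧ (∀ i, j i < k) ∧ (∃ i, j i = 0) ∧
    q = ∑ i, ε i • tetris^[j i] (P (n i))

/-- `q ∈ ⟨P⟩_{(−T)}`. -/
def InSpanNegT (k : ℕ) (P : ℕ → ℕ → ℤ) (q : ℕ → ℤ) : Prop :=
  ∃ (m : ℕ) (n : Fin (m + 1) → ℕ) (j : Fin (m + 1) → ℕ),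
    StrictMono n ∧ (∀ i, j i < k) ∧ (∃ i, j i = 0) ∧
    q = ∑ i, negT^[j i] (P (n i))

/-- `q ∈ ⟨p_a, …, p_b⟩_{(−T)}`. -/
def InSpanNegTRange (k : ℕ) (P : ℕ → ℕ → ℤ) (a b : ℕ) (q : ℕ → ℤ) : Prop :=
  ∃ (m : ℕ) (n : Fin (m + 1) → ℕ) (j : Fin (m + 1) → ℕ),
    StrictMono n ∧ (∀ i, a ≤ n i ∧ n i ≤ b) ∧ (∀ i, j i < k) ∧ (∃ i, j i = 0) ∧
    q = ∑ i, negT^[j i] (P (n i))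

/-- A cofinite ultrafilter on `FIN_{±k}` (coded as an ultrafilter on `ℕ → ℤ`
concentrating on `FIN_{±k}`). -/
def IsCofiniteUF (k : ℕ) (𝒰 : Ultrafilter (ℕ → ℤ)) : Prop :=
  {p | IsFin k p} ∈ 𝒰 ∧ ∀ m : ℕ, {p : ℕ → ℤ | ∀ n < m, p n = 0} ∈ 𝒰

/-- `A ∈ 𝒰 + 𝒱`. -/
def SumMem (𝒰 𝒱 : Ultrafilter (ℕ → ℤ)) (A : Set (ℕ → ℤ)) : Prop :=
  {p | {q | BlockLt p q ∧ p + q ∈ A} ∈ 𝒱} ∈ 𝒰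

/-- `𝒰` is subsymmetric: `A ∈ 𝒰` implies `−(A)₁ ∈ 𝒰`. -/
def IsSubsymmetric (𝒰 : Ultrafilter (ℕ → ℤ)) : Prop :=
  ∀ A ∈ 𝒰, {p : ℕ → ℤ | -p ∈ approx 1 A} ∈ 𝒰

/-- `𝒰 + (−T)^j 𝒰 = (−T)^j 𝒰 + 𝒰 = 𝒰` for all `j ≤ k`. -/
def IsIdempotentUF (k : ℕ) (𝒰 : Ultrafilter (ℕ → ℤ)) : Prop :=
  ∀ j ≤ k, ∀ A : Set (ℕ → ℤ),
    (SumMem 𝒰 (Ultrafilter.map (negT^[j]) 𝒰) A ↔ A ∈ 𝒰) ∧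
    (SumMem (Ultrafilter.map (negT^[j]) 𝒰) 𝒰 A ↔ A ∈ 𝒰)

/-- A cofinite subsymmetric ultrafilter on `FIN_{±k}` idempotent with respect to
all the maps `(−T)^j`, `j ≤ k`. -/
def IsGowersUF (k : ℕ) (𝒰 : Ultrafilter (ℕ → ℤ)) : Prop :=
  IsCofiniteUF k 𝒰 ∧ IsSubsymmetric 𝒰 ∧ IsIdempotentUF k 𝒰

/-- A `𝒰`-tree on `FIN_{±k}` with stem `s`. -/
structure IsUTree (k : ℕ) (𝒰 : Ultrafilter (ℕ → ℤ)) (U : Set (List (ℕ → ℤ)))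
    (s : List (ℕ → ℤ)) : Prop where
  blocks : ∀ t ∈ U, IsFinBlockSeq k t
  prefixClosed : ∀ t ∈ U, ∀ t' : List (ℕ → ℤ), t' <+: t → t' ∈ U
  stemMem : s ∈ U
  stemComparable : ∀ t ∈ U, s <+: t ∨ t <+: s
  branch : ∀ t ∈ U, s <+: t → {p | t ++ [p] ∈ U} ∈ 𝒰

/-- `[U]`, the set of infinite branches of a tree of finite block sequences. -/
def Branches (U : Set (List (ℕ → ℤ))) : Set (ℕ → ℕ → ℤ) :=
  {P | ∀ n : ℕ, (List.ofFn fun i : Fin n => P i.1) ∈ U}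

/-- The space `FIN_{±k}^[∞]` of infinite block sequences. -/
def BlockSeq (k : ℕ) : Type := {P : ℕ → ℕ → ℤ // IsBlockSeq k P}

/-- The metrizable topology on `FIN_{±k}^[∞]`, generated by the basic sets `[s]`. -/
instance BlockSeq.topology (k : ℕ) : TopologicalSpace (BlockSeq k) :=
  TopologicalSpace.generateFrom
    {O | ∃ s : List (ℕ → ℤ),
      O = {P : BlockSeq k | ∀ i : Fin s.length, P.1 i.1 = s.get i}}

/-- The Souslin operation applied to a Souslin scheme. -/
def SouslinOp {α : Type*} (F : List ℕ → Set α) : Set α :=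
  ⋃ x : ℕ → ℕ, ⋂ n : ℕ, F (List.ofFn fun i : Fin n => x i.1)

/-- `A` is Souslin measurable: it belongs to every field of sets containing the open
sets and closed under the Souslin operation. -/
def SouslinMeasurable {α : Type*} [TopologicalSpace α] (A : Set α) : Prop :=
  ∀ 𝓕 : Set (Set α),
    (∀ O : Set α, IsOpen O → O ∈ 𝓕) →
    (∀ B ∈ 𝓕, Bᶜ ∈ 𝓕) →
    (∀ B ∈ 𝓕, ∀ C ∈ 𝓕, B ∪ C ∈ 𝓕) →
    (∀ F : List ℕ → Set α, (∀ s, F s ∈ 𝓕) → SouslinOp F ∈ 𝓕) →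
    A ∈ 𝓕

/-- The map `Φ_m : FIN_{±2m} → FIN_{±m}` (its defining formula does not depend on `m`). -/
def Phi (p : ℕ → ℤ) : ℕ → ℤ := fun n =>
  if p n % 2 = 0 then p n / 2
  else if 0 < p n then (p n - 1) / 2
  else (p n + 1) / 2

/-- `Ψ = Φ_k ∘ Φ_{2k} : FIN_{±4k} → FIN_{±k}`. -/
def Psi (p : ℕ → ℤ) : ℕ → ℤ := Phi (Phi p)

/-!
Work with `-T` instead of `T`. By induction on `k`, lifting along `-T` and applying Ellis' lemma at
every step, there is a cofinite ultrafilter `𝒰` on `FIN_{±k}` such that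
`(-T)^i 𝒰 + (-T)^j 𝒰 = (-T)^{min i j} 𝒰`. Relative to any ultrafilter, Souslin measurable sets are
Ramsey: for every stem there is a tree, branching `𝒰`-often, whose branches all lie in the set or
all lie outside of it. So some colour contains all branches of a `𝒰`-tree with empty stem, and by
idempotence the blocks `p₀ < p₁ < …` can be chosen one after the other such that every block
sequence whose terms are sums of `(-T)^j pᵢ` over consecutive intervals is a branch of this tree.

Signs are recovered at the price of an error of norm one. The terms of `p₀ - T p₁, p₂ - T p₃, …` are
sums under `-T`, and if `a = (-T)^j p_{2l}` and `b = (-T)^j p_{2l+1}`, then `-(a - T b)` differs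
from the sum `-T a + b` by `-(a - T a) - (b - T b)`, whose values are `0` and `±1`.
-/

section InitialSegments

variable {α : Type*}

open PiNat

lemma res_suffix_res (x : ℕ → α) {m n : ℕ} (h : m ≤ n) : res x m <:+ res x n := by
  induction n, h using Nat.le_induction with
  | base => exact List.suffix_rfl
  | succ n _ ih => exact ih.trans (List.suffix_cons _ _)

lemma ofFn_eq_reverse_res (x : ℕ → α) (n : ℕ) :
    List.ofFn (fun i : Fin n => x i) = (res x n).reverse := by
  induction n with
  | zero => rfl
  | succ n ih => rw [List.ofFn_succ', res_succ, List.reverse_cons, List.concat_eq_append, ← ih]; rfl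

lemma exists_forall_res {Q : List α → Prop} (nil : Q []) (cons : ∀ u, Q u → ∃ a, Q (a :: u)) :
    ∃ x : ℕ → α, ∀ n, Q (res x n) := by
  have : Nonempty α := (cons [] nil).nonempty
  choose! next hnext using cons
  let u : ℕ → List α := fun n => (fun v => next v :: v)^[n] []
  have u_succ (n : ℕ) : u (n + 1) = next (u n) :: u n := iterate_succ_apply' _ _ _
  have res_eq (n : ℕ) : res (fun i => next (u i)) n = u n := by
    induction n with
    | zero => rfl
    | succ n ih => rw [res_succ, ih, u_succ]
  refine ⟨fun i => next (u i), fun n => ?_⟩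
  rw [res_eq]
  induction n with
  | zero => exact nil
  | succ n ih => exact u_succ n ▸ hnext _ ih

end InitialSegments

section TreeFilter

variable {X α : Type*}

open Filter PiNat

/-- The branches through the stem `s` of the tree which allows the points of `A u` as immediate
successors of the node `u`. The points of `X` are read as sequences through `ι`, and finite
sequences are coded as lists with the last term at the head, as in `PiNat.res`. -/
def treeBranches (ι : X → ℕ → α) (A : List α → Set α) (s : List α) : Set X :=
  {x | res (ι x) s.length = s ∧ ∀ n ≥ s.length, ι x n ∈ A (res (ι x) n)}

/-- The filter generated by the sets of branches of the `f`-branching trees with stem `s`.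
Membership of `Y` says that some `f`-tree with stem `s` has all of its branches in `Y`. -/
def treeFilter (ι : X → ℕ → α) (f : Filter α) (s : List α) : Filter X where
  sets := {Y | ∃ A : List α → Set α, (∀ u, A u ∈ f) ∧ treeBranches ι A s ⊆ Y}
  univ_sets := ⟨fun _ => univ, fun _ => univ_mem, subset_univ _⟩
  sets_of_superset := fun ⟨A, hA, hAY⟩ hYZ => ⟨A, hA, hAY.trans hYZ⟩
  inter_sets := fun ⟨A, hA, hAY⟩ ⟨B, hB, hBZ⟩ =>
    ⟨fun u => A u ∩ B u, fun u => inter_mem (hA u) (hB u), fun _ ⟨hx, hxn⟩ =>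
      ⟨hAY ⟨hx, fun n hn => (hxn n hn).1⟩, hBZ ⟨hx, fun n hn => (hxn n hn).2⟩⟩⟩

variable {ι : X → ℕ → α} {f : Filter α} {s : List α}

lemma treeBranches_mem_treeFilter {A : List α → Set α} (hA : ∀ u, A u ∈ f) :
    treeBranches ι A s ∈ treeFilter ι f s := ⟨A, hA, Subset.rfl⟩

lemma eventually_res_length_eq : ∀ᶠ x in treeFilter ι f s, res (ι x) s.length = s :=
  mem_of_superset (treeBranches_mem_treeFilter fun _ => univ_mem) fun _ hx => hx.1

lemma tendsto_apply_length : Tendsto (fun x => ι x s.length) (treeFilter ι f s) f :=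
  fun A hA => mem_map.2 <| mem_of_superset (treeBranches_mem_treeFilter (A := fun _ => A)
    fun _ => hA) fun _ hx => hx.2 _ le_rfl

/-- Diagonal intersection: the tree for `s` is thinned at each node `u` by the trees chosen for
the finitely many initial segments of `u`. -/
lemma eventually_forall_res {W : List α → X → Prop}
    (hW : ∀ t, ∀ᶠ x in treeFilter ι f t, W t x) (s : List α) :
    ∀ᶠ x in treeFilter ι f s, ∀ n ≥ s.length, W (res (ι x) n) x := by
  choose A hA hAW using hW
  let B : List α → Set α := fun u => ⋂ t ∈ {t | t <:+ u}, A t u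
  have hB (u : List α) : B u ∈ f := by
    have finite : {t | t <:+ u}.Finite := by
      simpa only [← List.mem_tails] using u.tails.finite_toSet
    exact (biInter_mem finite).2 fun t _ => hA t u
  filter_upwards [treeBranches_mem_treeFilter hB] with x hx n hn
  refine hAW (res (ι x) n) ⟨by rw [res_length], fun m hm => ?_⟩
  rw [res_length] at hm
  exact mem_iInter₂.1 (hx.2 m (hn.trans hm)) _ (res_suffix_res _ hm)

lemma mem_treeFilter_iff_cons {Y : Set X} :
    Y ∈ treeFilter ι f s ↔ ∀ᶠ a in f, Y ∈ treeFilter ι f (a :: s) := by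
  refine ⟨fun ⟨A, hA, hAY⟩ => mem_of_superset (hA s) fun a ha => ⟨A, hA, ?_⟩, fun h => ?_⟩
  · rintro x ⟨hx, hxn⟩
    obtain ⟨rfl, hxs⟩ : ι x s.length = a ∧ res (ι x) s.length = s := by simpa using hx
    refine hAY ⟨hxs, fun n hn => ?_⟩
    rcases hn.eq_or_lt with rfl | hlt
    · rwa [hxs]
    · exact hxn n hlt
  · have diag : ∀ᶠ x in treeFilter ι f s, ∀ n ≥ s.length,
        Y ∈ treeFilter ι f (res (ι x) n) → x ∈ Y :=
      eventually_forall_res (W := fun t x => Y ∈ treeFilter ι f t → x ∈ Y)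
        (fun t => eventually_imp_distrib_left.2 id) s
    filter_upwards [eventually_res_length_eq, tendsto_apply_length.eventually h, diag]
      with x hxs hxY hx
    refine hx (s.length + 1) (Nat.le_succ _) ?_
    rwa [res_succ, hxs]

lemma eventually_forall_res_of_hereditary {Q : List α → Prop}
    (hQ : ∀ u, Q u → ∀ᶠ a in f, Q (a :: u)) (hs : Q s) :
    ∀ᶠ x in treeFilter ι f s, ∀ n ≥ s.length, Q (res (ι x) n) := by
  let A : List α → Set α := fun u => {a | Q u → Q (a :: u)}
  have hA (u : List α) : A u ∈ f := eventually_imp_distrib_left.2 (hQ u)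
  filter_upwards [treeBranches_mem_treeFilter hA] with x ⟨hxs, hxn⟩ n hn
  induction n, hn using Nat.le_induction with
  | base => rwa [hxs]
  | succ n hn ih => exact hxn n hn ih

/-- Fusion: the `i`-th set only has to be respected beyond level `i`. -/
lemma iInter_mem_treeFilter {I : Type*} [Countable I] {Y : I → Set X}
    (h : ∀ᶠ x in treeFilter ι f s, ∀ n ≥ s.length, ∀ i, Y i ∈ treeFilter ι f (res (ι x) n)) :
    ⋂ i, Y i ∈ treeFilter ι f s := by
  obtain ⟨e, he⟩ := exists_injective_nat I
  have diag := eventually_forall_res (ι := ι) (f := f)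
    (W := fun t x => ∀ i ∈ e ⁻¹' Iic t.length, Y i ∈ treeFilter ι f t → x ∈ Y i)
    (fun t => (eventually_all_finite ((finite_Iic _).preimage he.injOn)).2
      fun i _ => eventually_imp_distrib_left.2 id) s
  filter_upwards [h, diag] with x hx hxW
  refine mem_iInter.2 fun i => ?_
  have hi : e i ≤ (res (ι x) (max s.length (e i))).length := by simp
  exact hxW _ (le_max_left _ _) i hi (hx _ (le_max_left _ _) i)

/-- The sets which are large for every stem: the complements are the Ramsey null sets. -/
def conullFilter (ι : X → ℕ → α) (f : Filter α) : Filter X := ⨆ s, treeFilter ι f s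

lemma mem_conullFilter {Y : Set X} : Y ∈ conullFilter ι f ↔ ∀ s, Y ∈ treeFilter ι f s := mem_iSup

instance (ι : X → ℕ → α) (f : Filter α) : CountableInterFilter (conullFilter ι f) where
  countable_sInter_mem S hS hSl := by
    have : Countable S := hS
    rw [sInter_eq_iInter]
    exact mem_conullFilter.2 fun s => iInter_mem_treeFilter <|
      Eventually.of_forall fun x n _ Y => mem_conullFilter.1 (hSl Y Y.2) _

end TreeFilter

section RamseySets

variable {X α : Type*}

open Filter PiNat

/-- A set is Ramsey with respect to `𝒰` if for every stem some `𝒰`-branching tree has all of its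
branches in the set or all of them outside of it. -/
def IsRamsey (ι : X → ℕ → α) (𝒰 : Ultrafilter α) (Y : Set X) : Prop :=
  ∀ s, Y ∈ treeFilter ι 𝒰 s ∨ Yᶜ ∈ treeFilter ι 𝒰 s

/-- The points which eventually lie on stems for which the complement of `Y` is not large. It is
the Ramsey counterpart of a measurable hull of `Y`. -/
def ramseyEnvelope (ι : X → ℕ → α) (𝒰 : Ultrafilter α) (Y : Set X) : Set X :=
  {x | ∀ᶠ n in atTop, Yᶜ ∉ treeFilter ι 𝒰 (res (ι x) n)}

variable {ι : X → ℕ → α} {𝒰 : Ultrafilter α} {s : List α} {Y Z : Set X}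

lemma eventually_mem_treeFilter_res (h : Y ∈ treeFilter ι 𝒰 s) :
    ∀ᶠ x in treeFilter ι 𝒰 s, ∀ n ≥ s.length, Y ∈ treeFilter ι 𝒰 (res (ι x) n) :=
  eventually_forall_res_of_hereditary (Q := fun u => Y ∈ treeFilter ι 𝒰 u)
    (fun _ => mem_treeFilter_iff_cons.1) h

lemma eventually_notMem_treeFilter_res (h : Y ∉ treeFilter ι 𝒰 s) :
    ∀ᶠ x in treeFilter ι 𝒰 s, ∀ n ≥ s.length, Y ∉ treeFilter ι 𝒰 (res (ι x) n) :=
  eventually_forall_res_of_hereditary (Q := fun u => Y ∉ treeFilter ι 𝒰 u)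
    (fun _ hu => Ultrafilter.eventually_not.2 (mt mem_treeFilter_iff_cons.2 hu)) h

lemma compl_ramseyEnvelope_mem_treeFilter (h : Yᶜ ∈ treeFilter ι 𝒰 s) :
    (ramseyEnvelope ι 𝒰 Y)ᶜ ∈ treeFilter ι 𝒰 s := by
  filter_upwards [eventually_mem_treeFilter_res h] with x hx hxY
  obtain ⟨n, hn, hnY⟩ := ((eventually_ge_atTop s.length).and hxY).exists
  exact hnY (hx n hn)

lemma ramseyEnvelope_mem_treeFilter (h : Yᶜ ∉ treeFilter ι 𝒰 s) :
    ramseyEnvelope ι 𝒰 Y ∈ treeFilter ι 𝒰 s := by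
  filter_upwards [eventually_notMem_treeFilter_res h] with x hx
  exact eventually_atTop.2 ⟨_, hx⟩

lemma isRamsey_ramseyEnvelope (Y : Set X) : IsRamsey ι 𝒰 (ramseyEnvelope ι 𝒰 Y) := fun _ =>
  (em _).symm.imp ramseyEnvelope_mem_treeFilter compl_ramseyEnvelope_mem_treeFilter

lemma eventuallyLE_ramseyEnvelope (Y : Set X) :
    Y ≤ᶠ[conullFilter ι 𝒰] ramseyEnvelope ι 𝒰 Y := mem_conullFilter.2 fun s => by
  by_cases h : Yᶜ ∈ treeFilter ι 𝒰 s
  · filter_upwards [h] with x hx hxY using absurd hxY hx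
  · filter_upwards [ramseyEnvelope_mem_treeFilter h] with x hx _ using hx

namespace IsRamsey

lemma compl (hY : IsRamsey ι 𝒰 Y) : IsRamsey ι 𝒰 Yᶜ := fun s => by
  simpa only [compl_compl] using (hY s).symm

lemma iUnion {I : Type*} [Countable I] {Y : I → Set X} (hY : ∀ i, IsRamsey ι 𝒰 (Y i)) :
    IsRamsey ι 𝒰 (⋃ i, Y i) := fun s => by
  refine or_iff_not_imp_left.2 fun h => ?_
  rw [compl_iUnion]
  refine iInter_mem_treeFilter ?_
  filter_upwards [eventually_notMem_treeFilter_res h] with x hx n hn i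
  exact (hY i _).resolve_left fun hi => hx n hn (mem_of_superset hi (subset_iUnion Y i))

lemma union (hY : IsRamsey ι 𝒰 Y) (hZ : IsRamsey ι 𝒰 Z) : IsRamsey ι 𝒰 (Y ∪ Z) :=
  union_eq_iUnion ▸ iUnion (Bool.forall_bool.2 ⟨hZ, hY⟩)

lemma congr (hY : IsRamsey ι 𝒰 Y) (h : Y =ᶠ[conullFilter ι 𝒰] Z) : IsRamsey ι 𝒰 Z := fun s =>
  have hs : Y =ᶠ[treeFilter ι 𝒰 s] Z := h.filter_mono (le_iSup _ s)
  (hY s).imp (eventually_congr hs.mem_iff).1 (eventually_congr hs.compl.mem_iff).1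

lemma ramseyEnvelope_eventuallyLE (hZ : IsRamsey ι 𝒰 Z) (h : Y ≤ᶠ[conullFilter ι 𝒰] Z) :
    ramseyEnvelope ι 𝒰 Y ≤ᶠ[conullFilter ι 𝒰] Z := mem_conullFilter.2 fun s => by
  rcases hZ s with hs | hs
  · filter_upwards [hs] with x hx _ using hx
  · have hY : Yᶜ ∈ treeFilter ι 𝒰 s := by
      filter_upwards [hs, mem_conullFilter.1 h s] with x hx hYZ hxY using hx (hYZ hxY)
    filter_upwards [compl_ramseyEnvelope_mem_treeFilter hY] with x hx hxE using absurd hxE hx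

lemma of_forall_eventually (hY : ∀ x ∈ Y, ∀ᶠ n in atTop, ∀ y, res (ι y) n = res (ι x) n → y ∈ Y) :
    IsRamsey ι 𝒰 Y := fun s => by
  refine or_iff_not_imp_left.2 fun h => ?_
  filter_upwards [eventually_notMem_treeFilter_res h] with x hx hxY
  obtain ⟨n, hn, hnY⟩ := ((eventually_ge_atTop s.length).and (hY x hxY)).exists
  refine hx n hn ?_
  filter_upwards [eventually_res_length_eq] with y hy
  exact hnY y (by simpa only [res_length] using hy)

end IsRamsey

lemma exists_preimage_singleton_mem_treeFilter {I : Type*} [Finite I] [NeBot (treeFilter ι 𝒰 s)]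
    {c : X → I} (hc : ∀ i, IsRamsey ι 𝒰 (c ⁻¹' {i})) : ∃ i, c ⁻¹' {i} ∈ treeFilter ι 𝒰 s := by
  by_contra! h
  have avoid : ∀ᶠ x in treeFilter ι 𝒰 s, ∀ i, c x ≠ i :=
    eventually_all.2 fun i => (hc i s).resolve_left (h i)
  obtain ⟨x, hx⟩ := avoid.exists
  exact hx _ rfl

end RamseySets

section SouslinOperation

open Filter PiNat

variable {X : Type*}

/-- The points picked out by the Souslin operation along the branches through the node `s`, which
is coded with its last term at the head. -/
def souslinBelow (F : List ℕ → Set X) (s : List ℕ) : Set X :=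
  {x | ∃ z : ℕ → ℕ, res z s.length = s ∧ ∀ n, x ∈ F (res z n).reverse}

lemma souslinBelow_nil (F : List ℕ → Set X) : souslinBelow F [] = SouslinOp F := by
  ext x
  simp [souslinBelow, SouslinOp, ofFn_eq_reverse_res]

lemma souslinBelow_subset (F : List ℕ → Set X) (s : List ℕ) : souslinBelow F s ⊆ F s.reverse :=
  fun _ ⟨_, hzs, hz⟩ => hzs ▸ hz s.length

lemma souslinBelow_subset_iUnion_cons (F : List ℕ → Set X) (s : List ℕ) :
    souslinBelow F s ⊆ ⋃ i, souslinBelow F (i :: s) := fun _ ⟨z, hzs, hz⟩ =>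
  mem_iUnion.2 ⟨z s.length, z, by rw [List.length_cons, res_succ, hzs], hz⟩

/-- The Szpilrajn-Marczewski argument: replacing each `souslinBelow F s` by its envelope makes the
Souslin operation fail to be exact on a countable union of null sets only. -/
theorem souslinOp_mem_of_exists_envelope {l : Filter X} [CountableInterFilter l]
    {M : Set (Set X)} (congr : ∀ Y ∈ M, ∀ Z, Y =ᶠ[l] Z → Z ∈ M)
    (iUnion : ∀ Y : ℕ → Set X, (∀ i, Y i ∈ M) → ⋃ i, Y i ∈ M)
    (envelope : ∀ Y, ∃ C ∈ M, Y ≤ᶠ[l] C ∧ ∀ Z ∈ M, Y ≤ᶠ[l] Z → C ≤ᶠ[l] Z)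
    {F : List ℕ → Set X} (hF : ∀ s, F s ∈ M) : SouslinOp F ∈ M := by
  choose C hCM le_C C_le using fun s => envelope (souslinBelow F s)
  have C_le_F (s : List ℕ) : C s ≤ᶠ[l] F s.reverse :=
    C_le s _ (hF _) (.of_forall (souslinBelow_subset F s))
  have C_le_iUnion (s : List ℕ) : C s ≤ᶠ[l] ⋃ i, C (i :: s) :=
    C_le s _ (iUnion _ fun i => hCM (i :: s)) <|
      EventuallyLE.trans (.of_forall (souslinBelow_subset_iUnion_cons F s))
        (Filter.EventuallyLE.countable_iUnion fun i => le_C (i :: s))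
  have C_nil_le : C [] ≤ᶠ[l] SouslinOp F := by
    filter_upwards [eventually_countable_forall.2 C_le_F,
      eventually_countable_forall.2 C_le_iUnion] with x hxF hxC hx
    obtain ⟨z, hz⟩ := exists_forall_res (Q := fun s => x ∈ C s) hx
      fun s hs => mem_iUnion.1 (hxC s hs)
    exact mem_iUnion.2 ⟨z, mem_iInter.2 fun n => ofFn_eq_reverse_res z n ▸ hxF _ (hz n)⟩
  exact congr _ (hCM []) _ (C_nil_le.antisymm (souslinBelow_nil F ▸ le_C []))

lemma IsRamsey.souslinOp {α : Type*} {ι : X → ℕ → α} {𝒰 : Ultrafilter α} {F : List ℕ → Set X}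
    (hF : ∀ s, IsRamsey ι 𝒰 (F s)) : IsRamsey ι 𝒰 (SouslinOp F) :=
  souslinOp_mem_of_exists_envelope (l := conullFilter ι 𝒰) (M := {Y | IsRamsey ι 𝒰 Y})
    (fun _ hY _ => hY.congr) (fun _ => iUnion)
    (fun Y => ⟨_, isRamsey_ramseyEnvelope Y, eventuallyLE_ramseyEnvelope Y,
      fun _ hZ => hZ.ramseyEnvelope_eventuallyLE⟩) hF

lemma eventually_forall_mem_of_isOpen {k : ℕ} {O : Set (BlockSeq k)} (hO : IsOpen O) :
    ∀ P ∈ O, ∀ᶠ n in atTop, ∀ Q : BlockSeq k, (∀ i < n, Q.1 i = P.1 i) → Q ∈ O := by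
  induction hO with
  | basic O hO =>
    obtain ⟨s, rfl⟩ := hO
    intro P hP
    filter_upwards [eventually_ge_atTop s.length] with n hn Q hQ i
    exact (hQ i (i.2.trans_le hn)).trans (hP i)
  | univ => exact fun _ _ => .of_forall fun _ _ _ => mem_univ _
  | inter O₁ O₂ _ _ ih₁ ih₂ =>
    intro P hP
    filter_upwards [ih₁ P hP.1, ih₂ P hP.2] with n h₁ h₂ Q hQ using ⟨h₁ Q hQ, h₂ Q hQ⟩
  | sUnion S _ ih =>
    rintro P ⟨O, hOS, hP⟩
    filter_upwards [ih O hOS P hP] with n hn Q hQ using ⟨O, hOS, hn Q hQ⟩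

lemma SouslinMeasurable.isRamsey {k : ℕ} {Y : Set (BlockSeq k)} (hY : SouslinMeasurable Y)
    (𝒰 : Ultrafilter (ℕ → ℤ)) : IsRamsey Subtype.val 𝒰 Y :=
  hY {Y | IsRamsey Subtype.val 𝒰 Y}
    (fun _ hO => .of_forall_eventually fun P hP =>
      (eventually_forall_mem_of_isOpen hO P hP).mono fun _ h Q hQ => h Q (res_eq_res.1 hQ))
    (fun _ => .compl) (fun _ hB _ => hB.union) (fun _ => .souslinOp)

end SouslinOperation

section Tetris

variable {k l j : ℕ} {p q : ℕ → ℤ}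

lemma tetris_apply (p : ℕ → ℤ) (n : ℕ) : tetris p n = p n - (p n).sign := by
  rcases lt_trichotomy (p n) 0 with h | h | h
  · simp [tetris, h, h.not_gt, Int.sign_eq_neg_one_of_neg h]
  · simp [tetris, h]
  · simp [tetris, h, Int.sign_eq_one_of_pos h]

lemma negT_apply (p : ℕ → ℤ) (n : ℕ) : negT p n = (p n).sign - p n := by
  rw [negT, Pi.neg_apply, tetris_apply, neg_sub]

lemma negT_iterate_eq_smul (j : ℕ) (p : ℕ → ℤ) : negT^[j] p = (-1 : ℤ) ^ j • tetris^[j] p := by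
  have tetris_neg : Function.Commute tetris Neg.neg := fun q => funext fun n => by
    simp only [tetris_apply, Pi.neg_apply, Int.sign_neg]; ring
  induction j generalizing p with
  | zero => simp
  | succ j ih =>
    rw [iterate_succ_apply, ih, negT, (tetris_neg.iterate_left j).eq, iterate_succ_apply,
      pow_succ, mul_neg_one, smul_neg, neg_smul]

lemma natAbs_negT_iterate_apply (j : ℕ) (p : ℕ → ℤ) (n : ℕ) :
    (negT^[j] p n).natAbs = (p n).natAbs - j := by
  induction j with
  | zero => rfl
  | succ j ih =>
    rw [iterate_succ_apply', negT_apply, Nat.sub_add_eq, ← ih]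
    rcases lt_trichotomy (negT^[j] p n) 0 with h | h | h
    · rw [Int.sign_eq_neg_one_of_neg h]; omega
    · simp [h]
    · rw [Int.sign_eq_one_of_pos h]; omega

lemma support_negT_iterate_subset (j : ℕ) (p : ℕ → ℤ) : support (negT^[j] p) ⊆ support p :=
  fun n hn hp => hn <| by simpa [hp] using natAbs_negT_iterate_apply j p n

lemma eq_zero_or_eq_zero_of_disjoint_support (h : Disjoint (support p) (support q)) (n : ℕ) :
    p n = 0 ∨ q n = 0 := by
  by_contra! hn
  exact h.ne_of_mem hn.1 hn.2 rfl

lemma BlockLt.disjoint_support (h : BlockLt p q) : Disjoint (support p) (support q) :=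
  disjoint_left.2 fun n hp hq => lt_irrefl n (h n n hp hq)

lemma BlockLt.mono {p' q' : ℕ → ℤ} (h : BlockLt p q) (hp : support p' ⊆ support p)
    (hq : support q' ⊆ support q) : BlockLt p' q' :=
  fun m n hm hn => h m n (hp hm) (hq hn)

lemma negT_iterate_add (h : Disjoint (support p) (support q)) (j : ℕ) :
    negT^[j] (p + q) = negT^[j] p + negT^[j] q := by
  induction j with
  | zero => rfl
  | succ j ih =>
    simp only [iterate_succ_apply', ih]
    funext n
    rcases eq_zero_or_eq_zero_of_disjoint_support (h.mono (support_negT_iterate_subset j p)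
      (support_negT_iterate_subset j q)) n with hn | hn <;> simp [negT_apply, hn]

lemma normLe_neg (h : normLe p k) : normLe (-p) k := fun n => by
  rw [Pi.neg_apply, abs_neg]; exact h n

lemma normLe_add_negT (p : ℕ → ℤ) : normLe (p + negT p) 1 := fun n => by
  rw [Pi.add_apply, negT_apply, add_sub_cancel]
  rcases Int.sign_trichotomy (p n) with h | h | h <;> simp [h]

lemma normLe_add (h : Disjoint (support p) (support q)) (hp : normLe p k) (hq : normLe q k) :
    normLe (p + q) k := fun n => by
  rcases eq_zero_or_eq_zero_of_disjoint_support h n with hn | hn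
  · simpa [hn] using hq n
  · simpa [hn] using hp n

lemma disjoint_support_sum {I : Type*} {s : Finset I} {f : I → ℕ → ℤ}
    (h : ∀ i ∈ s, Disjoint (support p) (support (f i))) :
    Disjoint (support p) (support (∑ i ∈ s, f i)) := by
  rw [Finset.sum_fn]
  exact (disjoint_iUnion₂_right.2 h).mono_right (Finset.support_sum s f)

lemma normLe_sum {I : Type*} {s : Finset I} {f : I → ℕ → ℤ}
    (disjoint : (s : Set I).PairwiseDisjoint fun i => support (f i))
    (hf : ∀ i ∈ s, normLe (f i) k) : normLe (∑ i ∈ s, f i) k := by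
  classical
  induction s using Finset.induction_on with
  | empty => simp [normLe]
  | insert a s ha ih =>
    rw [Finset.coe_insert, pairwiseDisjoint_insert_of_notMem (mod_cast ha)] at disjoint
    rw [Finset.forall_mem_insert] at hf
    rw [Finset.sum_insert ha]
    exact normLe_add (disjoint_support_sum disjoint.2) hf.1 (ih disjoint.1 hf.2)

lemma isFin_iff : IsFin k p ↔
    (support p).Finite ∧ (∀ n, (p n).natAbs ≤ k) ∧ ∃ n, (p n).natAbs = k := by
  simp only [IsFin, Int.abs_eq_natAbs, Nat.cast_le, Nat.cast_inj]

namespace IsFin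

lemma unique (hp : IsFin k p) (hp' : IsFin l p) : k = l := by
  obtain ⟨-, le_k, m, hm⟩ := isFin_iff.1 hp
  obtain ⟨-, le_l, n, hn⟩ := isFin_iff.1 hp'
  exact le_antisymm (hm ▸ le_l m) (hn ▸ le_k n)

lemma eq_zero (hp : IsFin 0 p) : p = 0 :=
  funext fun n => by simpa using (isFin_iff.1 hp).2.1 n

lemma add (h : Disjoint (support p) (support q)) (hp : IsFin k p) (hq : IsFin l q) :
    IsFin (max k l) (p + q) := by
  obtain ⟨hpfin, hpk, m, hm⟩ := isFin_iff.1 hp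
  obtain ⟨hqfin, hql, n, hn⟩ := isFin_iff.1 hq
  have natAbs_add (i : ℕ) : (p i + q i).natAbs = max (p i).natAbs (q i).natAbs := by
    rcases eq_zero_or_eq_zero_of_disjoint_support h i with hi | hi <;> simp [hi]
  simp only [isFin_iff, Pi.add_apply, natAbs_add]
  refine ⟨(hpfin.union hqfin).subset (support_add p q), fun i => max_le_max (hpk i) (hql i), ?_⟩
  rcases le_total k l with hkl | hkl
  · exact ⟨n, by rw [hn, max_eq_right ((hpk n).trans hkl), max_eq_right hkl]⟩
  · exact ⟨m, by rw [hm, max_eq_left ((hql m).trans hkl), max_eq_left hkl]⟩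

lemma sum {I : Type*} {s : Finset I} {f : I → ℕ → ℤ} {d : I → ℕ}
    (disjoint : (s : Set I).PairwiseDisjoint fun i => support (f i))
    (hf : ∀ i ∈ s, IsFin (d i) (f i)) : IsFin (s.sup d) (∑ i ∈ s, f i) := by
  classical
  induction s using Finset.induction_on with
  | empty => simp [IsFin]
  | insert a s ha ih =>
    rw [Finset.coe_insert, pairwiseDisjoint_insert_of_notMem (mod_cast ha)] at disjoint
    rw [Finset.forall_mem_insert] at hf
    rw [Finset.sum_insert ha, Finset.sup_insert]
    exact add (disjoint_support_sum disjoint.2) hf.1 (ih disjoint.1 hf.2)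

lemma negT_iterate (hp : IsFin k p) (j : ℕ) : IsFin (k - j) (negT^[j] p) := by
  obtain ⟨hfin, hle, n, hn⟩ := isFin_iff.1 hp
  simp only [isFin_iff, natAbs_negT_iterate_apply]
  exact ⟨hfin.subset (support_negT_iterate_subset j p), fun i => Nat.sub_le_sub_right (hle i) j,
    n, by rw [hn]⟩

lemma negT_iterate_eq_zero (hp : IsFin k p) (hj : k ≤ j) : negT^[j] p = 0 :=
  eq_zero (Nat.sub_eq_zero_of_le hj ▸ hp.negT_iterate j)

lemma negT_iterate_min (hp : IsFin k p) (j : ℕ) : negT^[min j k] p = negT^[j] p := by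
  rcases le_total j k with h | h
  · rw [min_eq_left h]
  · rw [min_eq_right h, hp.negT_iterate_eq_zero le_rfl, hp.negT_iterate_eq_zero h]

end IsFin

end Tetris

section GowersUltrafilter

open Filter

attribute [local instance] Ultrafilter.add Ultrafilter.addSemigroup

lemma exists_idempotent_of_absorbing {M : Type*} [AddSemigroup M] [TopologicalSpace M] [T2Space M]
    (continuous_add_right : ∀ r : M, Continuous (· + r)) {K : Set M} (nonempty : K.Nonempty)
    (isCompact : IsCompact K) (add_mem : ∀ v ∈ K, ∀ w ∈ K, v + w ∈ K) {u : M} (hu : u + u = u)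
    (add_left : ∀ v ∈ K, u + v ∈ K) (add_right : ∀ v ∈ K, v + u ∈ K) :
    ∃ v ∈ K, v + v = v ∧ u + v = v ∧ v + u = v := by
  obtain ⟨_, ⟨x, hx, rfl⟩, hw⟩ := exists_idempotent_in_compact_add_subsemigroup
    continuous_add_right ((· + u) '' K) (nonempty.image _)
    (isCompact.image (continuous_add_right u)) <| by
      rintro _ ⟨x, hx, rfl⟩ _ ⟨y, hy, rfl⟩
      exact ⟨x + u + y, add_mem _ (add_right x hx) y hy, by simp only [add_assoc]⟩
  beta_reduce at hw
  have hwu : x + u + u = x + u := by rw [add_assoc, hu]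
  refine ⟨u + (x + u), add_left _ (add_right x hx), ?_, ?_, ?_⟩
  · rw [add_assoc, ← add_assoc (x + u), hwu, hw]
  · rw [← add_assoc, hu]
  · rw [add_assoc, hwu]

/-- The ultrafilters below this filter are the cofinite ultrafilters on `FIN_{±k}`. -/
def blockFilter (k : ℕ) : Filter (ℕ → ℤ) := ⨅ m : ℕ, 𝓟 {p | IsFin k p ∧ ∀ n < m, p n = 0}

variable {k l : ℕ} {𝒰 𝒱 : Ultrafilter (ℕ → ℤ)}

lemma mem_blockFilter {Y : Set (ℕ → ℤ)} :
    Y ∈ blockFilter k ↔ ∃ m : ℕ, ∀ p, IsFin k p → (∀ n < m, p n = 0) → p ∈ Y := by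
  have anti : Antitone fun m : ℕ => {p | IsFin k p ∧ ∀ n < m, p n = 0} :=
    fun a b hab p hp => ⟨hp.1, fun n hn => hp.2 n (hn.trans_le hab)⟩
  simp [blockFilter, (hasBasis_iInf_principal anti.directed_ge).mem_iff, subset_def]

lemma eventually_isFin (k : ℕ) : ∀ᶠ p in blockFilter k, IsFin k p :=
  mem_blockFilter.2 ⟨0, fun _ hp _ => hp⟩

lemma eventually_blockLt {p : ℕ → ℤ} (hp : (support p).Finite) (k : ℕ) :
    ∀ᶠ q in blockFilter k, BlockLt p q := by
  obtain ⟨b, hb⟩ := hp.bddAbove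
  refine mem_blockFilter.2 ⟨b + 1, fun q _ hq m n hm hn => ?_⟩
  by_contra! hnm
  exact hn (hq n (Nat.lt_succ_of_le (hnm.trans (hb hm))))

lemma sign_sub_self_neg_add_sign (x : ℤ) : (-(x + x.sign)).sign - -(x + x.sign) = x := by
  rcases lt_trichotomy x 0 with h | rfl | h
  · rw [Int.sign_eq_neg_one_of_neg h, Int.sign_eq_one_of_pos (by omega)]; ring
  · rfl
  · rw [Int.sign_eq_one_of_pos h, Int.sign_eq_neg_one_of_neg (by omega)]; ring

lemma exists_negT_eq {a : ℕ → ℤ} (ha : IsFin k a) (m : ℕ) (hm : ∀ n < m, a n = 0) :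
    ∃ p, IsFin (k + 1) p ∧ (∀ n < m, p n = 0) ∧ negT p = a := by
  obtain ⟨hfin, hle, i, hi⟩ := isFin_iff.1 ha
  obtain ⟨b, hb, hmb⟩ := hfin.infinite_compl.exists_gt m
  let p : ℕ → ℤ := update (fun n => -(a n + (a n).sign)) b 1
  have p_eq_zero {n : ℕ} (hn : a n = 0) (hnb : n ≠ b) : p n = 0 := by simp [p, hn, hnb]
  have negT_p : negT p = a := funext fun n => by
    rw [negT_apply]
    by_cases hn : n = b
    · simp [p, hn, notMem_support.1 hb]
    · simpa only [p, update_of_ne hn] using sign_sub_self_neg_add_sign (a n)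
  have natAbs_p (n : ℕ) : (a n).natAbs = (p n).natAbs - 1 :=
    negT_p ▸ natAbs_negT_iterate_apply 1 p n
  refine ⟨p, isFin_iff.2 ⟨?_, fun n => ?_, ?_⟩, fun n hn => p_eq_zero (hm n hn) (by omega), negT_p⟩
  · refine (hfin.insert b).subset fun n hn => ?_
    by_contra hnb
    rw [mem_insert_iff, not_or, notMem_support] at hnb
    exact hn (p_eq_zero hnb.2 hnb.1)
  · have := natAbs_p n
    have := hle n
    omega
  · rcases Nat.eq_zero_or_pos k with rfl | hk
    · exact ⟨b, by simp [p]⟩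
    · exact ⟨i, by have := natAbs_p i; omega⟩

lemma blockFilter_le_map_negT (k : ℕ) : blockFilter k ≤ map negT (blockFilter (k + 1)) :=
  fun Y hY => by
    obtain ⟨m, hm⟩ := mem_blockFilter.1 (mem_map.1 hY)
    refine mem_blockFilter.2 ⟨m, fun a ha ham => ?_⟩
    obtain ⟨p, hp, hpm, rfl⟩ := exists_negT_eq ha m ham
    exact hm p hp hpm

lemma eventually_eventually_blockLt (h𝒰 : ↑𝒰 ≤ blockFilter k) (h𝒱 : ↑𝒱 ≤ blockFilter l) :
    ∀ᶠ p in 𝒰, ∀ᶠ q in 𝒱, BlockLt p q :=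
  ((eventually_isFin k).filter_mono h𝒰).mono fun _ hp => h𝒱 (eventually_blockLt hp.1 l)

lemma add_le_blockFilter (h𝒰 : ↑𝒰 ≤ blockFilter k) (h𝒱 : ↑𝒱 ≤ blockFilter l) :
    ↑(𝒰 + 𝒱) ≤ blockFilter (max k l) := by
  refine le_iInf fun m => le_principal_iff.2 ?_
  have tail (j : ℕ) : ∀ᶠ p in blockFilter j, IsFin j p ∧ ∀ n < m, p n = 0 :=
    mem_blockFilter.2 ⟨m, fun p hp hpm => ⟨hp, hpm⟩⟩
  refine (Ultrafilter.eventually_add 𝒰 𝒱 _).2 ?_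
  filter_upwards [h𝒰 (tail k), eventually_eventually_blockLt h𝒰 h𝒱] with p hp hpq
  filter_upwards [h𝒱 (tail l), hpq] with q hq hlt
  exact ⟨hp.1.add hlt.disjoint_support hq.1, fun n hn => by simp [hp.2 n hn, hq.2 n hn]⟩

lemma map_negT_add (h𝒰 : ↑𝒰 ≤ blockFilter k) (h𝒱 : ↑𝒱 ≤ blockFilter l) :
    (𝒰 + 𝒱).map negT = 𝒰.map negT + 𝒱.map negT := by
  refine Ultrafilter.eq_of_le fun A hA => ?_
  have sum_mem : ∀ᶠ p in 𝒰, ∀ᶠ q in 𝒱, negT p + negT q ∈ A :=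
    (Ultrafilter.eventually_add (𝒰.map negT) (𝒱.map negT) (· ∈ A)).1 hA
  refine (Ultrafilter.eventually_add 𝒰 𝒱 (negT · ∈ A)).2 ?_
  filter_upwards [sum_mem, eventually_eventually_blockLt h𝒰 h𝒱] with p hp hpq
  filter_upwards [hp, hpq] with q hq hlt
  rwa [show negT (p + q) = negT p + negT q from negT_iterate_add hlt.disjoint_support 1]

lemma isClosed_setOf_ultrafilter_le {α : Type*} (f : Filter α) :
    IsClosed {𝒰 : Ultrafilter α | ↑𝒰 ≤ f} := by
  simp only [le_def, ofPred_forall]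
  exact isClosed_biInter fun A _ => ultrafilter_isClosed_basic A

/-- Idempotence with respect to all the maps `(-T)^j`, in a form with two exponents which passes
from `𝒰` to suitable lifts of `𝒰` along `-T`. -/
def IsTetrisIdempotent (𝒰 : Ultrafilter (ℕ → ℤ)) : Prop :=
  ∀ i j, 𝒰.map negT^[i] + 𝒰.map negT^[j] = 𝒰.map negT^[min i j]

lemma exists_isTetrisIdempotent_map_negT_eq (h𝒰 : ↑𝒰 ≤ blockFilter k)
    (idem : IsTetrisIdempotent 𝒰) :
    ∃ 𝒱 : Ultrafilter (ℕ → ℤ), ↑𝒱 ≤ blockFilter (k + 1) ∧ 𝒱.map negT = 𝒰 ∧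
      𝒱 + 𝒱 = 𝒱 ∧ 𝒰 + 𝒱 = 𝒱 ∧ 𝒱 + 𝒰 = 𝒱 := by
  let fibre : Filter (ℕ → ℤ) := blockFilter (k + 1) ⊓ comap negT 𝒰
  let K : Set (Ultrafilter (ℕ → ℤ)) := {𝒱 | ↑𝒱 ≤ fibre}
  have mem_K {𝒱 : Ultrafilter (ℕ → ℤ)} :
      𝒱 ∈ K ↔ ↑𝒱 ≤ blockFilter (k + 1) ∧ 𝒱.map negT = 𝒰 :=
    le_inf_iff.trans <| and_congr_right' <|
      map_le_iff_le_comap.symm.trans (Ultrafilter.coe_le_coe (f := 𝒱.map negT))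
  have nonempty : K.Nonempty := by
    have : fibre.NeBot := neBot_inf_comap_iff_map.2 <|
      𝒰.neBot.mono (le_inf (h𝒰.trans (blockFilter_le_map_negT k)) le_rfl)
    exact Ultrafilter.exists_le _
  have add_mem : ∀ 𝒱 ∈ K, ∀ 𝒲 ∈ K, 𝒱 + 𝒲 ∈ K := fun 𝒱 h𝒱 𝒲 h𝒲 => by
    rw [mem_K] at *
    refine ⟨by simpa using add_le_blockFilter h𝒱.1 h𝒲.1, ?_⟩
    rw [map_negT_add h𝒱.1 h𝒲.1, h𝒱.2, h𝒲.2]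
    exact idem 0 0
  have add_left : ∀ 𝒱 ∈ K, 𝒰 + 𝒱 ∈ K := fun 𝒱 h𝒱 => by
    rw [mem_K] at *
    refine ⟨by simpa using add_le_blockFilter h𝒰 h𝒱.1, ?_⟩
    rw [map_negT_add h𝒰 h𝒱.1, h𝒱.2]
    exact idem 1 0
  have add_right : ∀ 𝒱 ∈ K, 𝒱 + 𝒰 ∈ K := fun 𝒱 h𝒱 => by
    rw [mem_K] at *
    refine ⟨by simpa using add_le_blockFilter h𝒱.1 h𝒰, ?_⟩
    rw [map_negT_add h𝒱.1 h𝒰, h𝒱.2]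
    exact idem 0 1
  obtain ⟨𝒱, h𝒱, h⟩ := exists_idempotent_of_absorbing Ultrafilter.continuous_add_left nonempty
    (isClosed_setOf_ultrafilter_le _).isCompact add_mem (idem 0 0) add_left add_right
  exact ⟨𝒱, (mem_K.1 h𝒱).1, (mem_K.1 h𝒱).2, h⟩

lemma exists_isTetrisIdempotent (k : ℕ) :
    ∃ 𝒰 : Ultrafilter (ℕ → ℤ), ↑𝒰 ≤ blockFilter k ∧ IsTetrisIdempotent 𝒰 := by
  induction k with
  | zero =>
    have isFin_zero : IsFin 0 0 := by simp [IsFin]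
    have map_zero (j : ℕ) : (pure 0 : Ultrafilter (ℕ → ℤ)).map negT^[j] = pure 0 := by
      rw [Ultrafilter.map_pure, isFin_zero.negT_iterate_eq_zero j.zero_le]
    refine ⟨pure 0, pure_le_iff.2 fun Y hY => ?_, fun i j => ?_⟩
    · obtain ⟨m, hm⟩ := mem_blockFilter.1 hY
      exact hm 0 isFin_zero fun _ _ => rfl
    · simp only [map_zero]
      rfl
  | succ k ih =>
    obtain ⟨𝒰, h𝒰, idem⟩ := ih
    obtain ⟨𝒱, h𝒱k, h𝒱𝒰, h𝒱𝒱, h𝒰𝒱, hsym⟩ := exists_isTetrisIdempotent_map_negT_eq h𝒰 idem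
    have map_succ (j : ℕ) : 𝒱.map negT^[j + 1] = 𝒰.map negT^[j] := by
      rw [iterate_succ, ← Ultrafilter.map_map, h𝒱𝒰]
    have h0 (j : ℕ) : 𝒰 + 𝒰.map negT^[j] = 𝒰 := by simpa using idem 0 j
    have h0' (j : ℕ) : 𝒰.map negT^[j] + 𝒰 = 𝒰 := by simpa using idem j 0
    refine ⟨𝒱, h𝒱k, fun i j => ?_⟩
    rcases i with _ | i <;> rcases j with _ | j
    · exact h𝒱𝒱
    · rw [map_succ, Nat.zero_min]
      change 𝒱 + _ = 𝒱
      rw [← hsym, add_assoc, h0]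
    · rw [map_succ, Nat.min_zero]
      change _ + 𝒱 = 𝒱
      rw [← h𝒰𝒱, ← add_assoc, h0']
    · simp only [map_succ, Nat.add_min_add_right, idem i j]

end GowersUltrafilter

section Homogeneous

open Filter PiNat

attribute [local instance] Ultrafilter.add

variable {k : ℕ} {𝒰 : Ultrafilter (ℕ → ℤ)} {A : List (ℕ → ℤ) → Set (ℕ → ℤ)}
  {s : List (ℕ → ℤ) × (ℕ → ℤ)} {p : ℕ → ℤ}

/-- A pair `(t, x)` stands for a block sequence under construction with completed terms `t`, the
last one at the head, and partial sum `x` of the next term. This is the set of pairs which result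
from `S` by adding some `(-T)^j p` to the partial sum; `j = k` amounts to leaving `p` out. -/
def extendReadings (k : ℕ) (p : ℕ → ℤ) (S : Set (List (ℕ → ℤ) × (ℕ → ℤ))) :
    Set (List (ℕ → ℤ) × (ℕ → ℤ)) :=
  image2 (fun s j => (s.1, s.2 + negT^[j] p)) S (Iic k)

/-- All pairs in the sense of `extendReadings` which can be formed from the blocks in a list, used
from the last to the first. A partial sum may be declared a completed term once it lies
in `FIN_{±k}`. -/
def readings (k : ℕ) : List (ℕ → ℤ) → Set (List (ℕ → ℤ) × (ℕ → ℤ))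
  | [] => {([], 0)}
  | p :: u => extendReadings k p (readings k u) ∪
      (fun s => (s.2 :: s.1, 0)) '' {s ∈ extendReadings k p (readings k u) | IsFin k s.2}

/-- Adding to the partial sum any `(-T)^j p`, for `𝒰`-almost every `p`, produces a term which the
tree given by `A` allows after the completed ones. -/
def IsPromising (𝒰 : Ultrafilter (ℕ → ℤ)) (k : ℕ) (A : List (ℕ → ℤ) → Set (ℕ → ℤ))
    (s : List (ℕ → ℤ) × (ℕ → ℤ)) : Prop :=
  ∀ j ≤ k, ∀ᶠ p in 𝒰, IsFin k (s.2 + negT^[j] p) → s.2 + negT^[j] p ∈ A s.1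

lemma finite_readings (k : ℕ) (u : List (ℕ → ℤ)) : (readings k u).Finite := by
  induction u with
  | nil => exact finite_singleton _
  | cons p u ih =>
    have finite : (extendReadings k p (readings k u)).Finite := ih.image2 _ (finite_Iic k)
    exact finite.union ((finite.sep _).image _)

lemma cons_zero_mem_readings (hk : 1 ≤ k) {u t : List (ℕ → ℤ)} {x : ℕ → ℤ}
    (h : (t, x) ∈ readings k u) (hx : IsFin k x) : (x :: t, 0) ∈ readings k u := by
  have ne_zero : x ≠ 0 := by
    rintro rfl
    obtain ⟨-, -, _, hn⟩ := isFin_iff.1 hx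
    simp only [Pi.zero_apply, Int.natAbs_zero] at hn
    omega
  cases u with
  | nil => exact absurd (congrArg Prod.snd h) ne_zero
  | cons p u =>
    rcases h with h | ⟨s, -, hs⟩
    · exact Or.inr ⟨(t, x), ⟨h, hx⟩, rfl⟩
    · exact absurd (congrArg Prod.snd hs).symm ne_zero

lemma sum_Ico_mem_readings {P : ℕ → ℕ → ℤ} (hP : ∀ n, IsFin k (P n)) {a b : ℕ} (hab : a ≤ b)
    {t : List (ℕ → ℤ)} (h : (t, 0) ∈ readings k (res P a)) (J : ℕ → ℕ) :
    (t, ∑ i ∈ Finset.Ico a b, negT^[J i] (P i)) ∈ readings k (res P b) := by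
  induction b, hab using Nat.le_induction with
  | base => simpa using h
  | succ b hab ih =>
    refine Or.inl ⟨_, ih, min (J b) k, mem_Iic.2 (min_le_right _ _), ?_⟩
    rw [Finset.sum_Ico_succ_top hab, ← (hP b).negT_iterate_min]

namespace IsPromising

lemma mem (h𝒰 : ↑𝒰 ≤ blockFilter k) (hs : IsPromising 𝒰 k A s) (hfin : IsFin k s.2) :
    s.2 ∈ A s.1 := by
  obtain ⟨p, hp, hpk⟩ := ((hs k le_rfl).and (h𝒰 (eventually_isFin k))).exists
  rw [hpk.negT_iterate_eq_zero le_rfl, add_zero] at hp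
  exact hp hfin

lemma nil_zero (hk : 1 ≤ k) (h𝒰 : ↑𝒰 ≤ blockFilter k) (hA : ∀ u, A u ∈ 𝒰) (t : List (ℕ → ℤ)) :
    IsPromising 𝒰 k A (t, 0) := fun j _ => by
  simp only [zero_add]
  filter_upwards [hA t, h𝒰 (eventually_isFin k)] with p hpA hp hj
  obtain rfl : j = 0 := by
    by_contra hj0
    exact (Nat.sub_lt hk (Nat.pos_of_ne_zero hj0)).ne ((hp.negT_iterate j).unique hj)
  exact hpA

lemma eventually_add (idem : IsTetrisIdempotent 𝒰) (hs : IsPromising 𝒰 k A s) :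
    ∀ᶠ p in 𝒰, ∀ j ≤ k, IsPromising 𝒰 k A (s.1, s.2 + negT^[j] p) := by
  refine (eventually_all_finite (finite_Iic k)).2 fun i _ =>
    (eventually_all_finite (finite_Iic k)).2 fun j hj => ?_
  let B : Set (ℕ → ℤ) := {w | IsFin k (s.2 + w) → s.2 + w ∈ A s.1}
  have hB : B ∈ 𝒰.map negT^[i] + 𝒰.map negT^[j] :=
    idem i j ▸ hs (min i j) ((min_le_right i j).trans hj)
  have add_mem : ∀ᶠ p in 𝒰, ∀ᶠ q in 𝒰, negT^[i] p + negT^[j] q ∈ B :=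
    (Ultrafilter.eventually_add (𝒰.map negT^[i]) (𝒰.map negT^[j]) (· ∈ B)).1 hB
  filter_upwards [add_mem] with p hp
  filter_upwards [hp] with q hq
  rw [add_assoc]
  exact hq

lemma eventually_forall_readings_cons (hk : 1 ≤ k) (h𝒰 : ↑𝒰 ≤ blockFilter k)
    (idem : IsTetrisIdempotent 𝒰) (hA : ∀ u, A u ∈ 𝒰) {u : List (ℕ → ℤ)}
    (hu : ∀ s ∈ readings k u, IsPromising 𝒰 k A s) :
    ∀ᶠ p in 𝒰, ∀ s ∈ readings k (p :: u), IsPromising 𝒰 k A s := by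
  filter_upwards [(eventually_all_finite (finite_readings k u)).2
    fun s hs => (hu s hs).eventually_add idem] with p hp
  rintro _ (⟨s, hs, j, hj, rfl⟩ | ⟨_, _, rfl⟩)
  · exact hp s hs j hj
  · exact nil_zero hk h𝒰 hA _

end IsPromising

lemma exists_blockSeq_forall_isPromising (hk : 1 ≤ k) (h𝒰 : ↑𝒰 ≤ blockFilter k)
    (idem : IsTetrisIdempotent 𝒰) (hA : ∀ u, A u ∈ 𝒰) :
    ∃ P : BlockSeq k, ∀ n, ∀ s ∈ readings k (res P.1 n), IsPromising 𝒰 k A s := by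
  let Q (u : List (ℕ → ℤ)) : Prop := (∀ p ∈ u, IsFin k p) ∧
    u.Pairwise (fun q p => BlockLt p q) ∧ ∀ s ∈ readings k u, IsPromising 𝒰 k A s
  have hQ_nil : Q [] := by
    refine ⟨by simp, List.Pairwise.nil, ?_⟩
    rintro _ rfl
    exact .nil_zero hk h𝒰 hA _
  have hQ_cons (u : List (ℕ → ℤ)) : Q u → ∃ q, Q (q :: u) := by
    rintro ⟨hfin, hlt, hu⟩
    have fin : ∀ᶠ p in 𝒰, IsFin k p := h𝒰 (eventually_isFin k)
    have lt : ∀ᶠ q in 𝒰, ∀ p ∈ u, BlockLt p q :=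
      (eventually_all_finite u.finite_toSet).2 fun p hp => h𝒰 (eventually_blockLt (hfin p hp).1 k)
    obtain ⟨q, hq, hqu, hqr⟩ :=
      (fin.and (lt.and (IsPromising.eventually_forall_readings_cons hk h𝒰 idem hA hu))).exists
    exact ⟨q, List.forall_mem_cons.2 ⟨hq, hfin⟩, List.pairwise_cons.2 ⟨hqu, hlt⟩, hqr⟩
  obtain ⟨P, hP⟩ := exists_forall_res hQ_nil hQ_cons
  have mem_res {m n : ℕ} (h : m < n) : P m ∈ res P n :=
    (res_suffix_res P h).subset List.mem_cons_self
  have isBlockSeq : IsBlockSeq k P := ⟨fun n => (hP (n + 1)).1 _ (mem_res n.lt_succ_self),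
    fun m n hmn => List.rel_of_pairwise_cons (hP (n + 1)).2.1 (mem_res hmn)⟩
  exact ⟨⟨P, isBlockSeq⟩, fun n => (hP n).2.2⟩

theorem exists_blockSeq_forall_sum_Ico_mem (hk : 1 ≤ k) (h𝒰 : ↑𝒰 ≤ blockFilter k)
    (idem : IsTetrisIdempotent 𝒰) {Y : Set (BlockSeq k)}
    (hY : Y ∈ treeFilter Subtype.val 𝒰 []) :
    ∃ P : BlockSeq k, ∀ (N : ℕ → ℕ) (J : ℕ → ℕ → ℕ), N 0 = 0 → Monotone N →
      ∀ R : BlockSeq k,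
        (∀ m, R.1 m = ∑ i ∈ Finset.Ico (N m) (N (m + 1)), negT^[J m i] (P.1 i)) → R ∈ Y := by
  obtain ⟨A, hA, hAY⟩ := hY
  obtain ⟨P, hP⟩ := exists_blockSeq_forall_isPromising hk h𝒰 idem hA
  refine ⟨P, fun N J hN0 hN R hR => hAY ⟨rfl, fun m _ => ?_⟩⟩
  have reading_term (m : ℕ) (h : (res R.1 m, 0) ∈ readings k (res P.1 (N m))) :
      (res R.1 m, R.1 m) ∈ readings k (res P.1 (N (m + 1))) :=
    hR m ▸ sum_Ico_mem_readings P.2.1 (hN m.le_succ) h (J m)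
  have reading (m : ℕ) : (res R.1 m, 0) ∈ readings k (res P.1 (N m)) := by
    induction m with
    | zero => rw [hN0]; rfl
    | succ m ih => exact cons_zero_mem_readings hk (reading_term m ih) (R.2.1 m)
  exact (hP _ _ (reading_term m (reading m))).mem h𝒰 (R.2.1 m)

lemma neBot_treeFilter_nil (hk : 1 ≤ k) (h𝒰 : ↑𝒰 ≤ blockFilter k) (idem : IsTetrisIdempotent 𝒰) :
    NeBot (treeFilter (Subtype.val : BlockSeq k → ℕ → ℕ → ℤ) 𝒰 []) := by
  refine ⟨fun h => ?_⟩
  obtain ⟨P, hP⟩ := exists_blockSeq_forall_sum_Ico_mem hk h𝒰 idem (empty_mem_iff_bot.2 h)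
  exact hP id 0 rfl monotone_id P fun m => by simp

end Homogeneous

section Approximation

variable {k : ℕ} {P Q : ℕ → ℕ → ℤ} {p q : ℕ → ℤ} {δ : ℤ}

namespace IsBlockSeq

lemma pairwise_disjoint_support (hP : IsBlockSeq k P) :
    Pairwise fun i j => Disjoint (support (P i)) (support (P j)) :=
  (pairwise_disjoint_on fun i => support (P i)).2 fun m n h => (hP.2 m n h).disjoint_support

lemma sum_Ico (hP : IsBlockSeq k P) {N : ℕ → ℕ} (hN : Monotone N) {J : ℕ → ℕ → ℕ}
    (hJ : ∀ m, ∃ i ∈ Finset.Ico (N m) (N (m + 1)), J m i = 0) :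
    IsBlockSeq k fun m => ∑ i ∈ Finset.Ico (N m) (N (m + 1)), negT^[J m i] (P i) := by
  refine ⟨fun m => ?_, fun m n hmn x y hx hy => ?_⟩
  · have sup_eq : (Finset.Ico (N m) (N (m + 1))).sup (fun i => k - J m i) = k := by
      obtain ⟨i, hi, hi0⟩ := hJ m
      refine le_antisymm (Finset.sup_le fun i _ => Nat.sub_le k (J m i)) ?_
      simpa [hi0] using Finset.le_sup (f := fun i => k - J m i) hi
    refine sup_eq ▸ IsFin.sum (fun i _ j _ hij => ?_) fun i _ => (hP.1 i).negT_iterate (J m i)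
    exact (hP.pairwise_disjoint_support hij).mono (support_negT_iterate_subset _ _)
      (support_negT_iterate_subset _ _)
  · simp only [Finset.sum_apply] at hx hy
    obtain ⟨i, hi, hix⟩ := Finset.exists_ne_zero_of_sum_ne_zero hx
    obtain ⟨j, hj, hjy⟩ := Finset.exists_ne_zero_of_sum_ne_zero hy
    have hij : i < j := (Finset.mem_Ico.1 hi).2.trans_le
      ((hN (Nat.succ_le_of_lt hmn)).trans (Finset.mem_Ico.1 hj).1)
    exact (hP.2 i j hij).mono (support_negT_iterate_subset _ _)
      (support_negT_iterate_subset _ _) x y hix hjy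

lemma sum_apply_ne_zero (hP : IsBlockSeq k P) {s : Finset ℕ} {δ : ℕ → ℤ} {j : ℕ → ℕ} {l x : ℕ}
    (hl : l ∈ s) (hδ : δ l ≠ 0) (hj : j l < k) (hx : (P l x).natAbs = k) :
    (∑ i ∈ s, δ i • negT^[j i] (P i)) x ≠ 0 := by
  have hPlx : P l x ≠ 0 := by omega
  have others (i : ℕ) (hi : i ≠ l) : negT^[j i] (P i) x = 0 := by
    by_contra hne
    exact (hP.pairwise_disjoint_support hi).ne_of_mem (support_negT_iterate_subset _ _ hne) hPlx rfl
  rw [Finset.sum_apply, Finset.sum_eq_single_of_mem l hl fun i _ hi => by simp [others i hi]]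
  have := natAbs_negT_iterate_apply (j l) (P l) x
  exact smul_ne_zero hδ (by omega)

end IsBlockSeq

/-- The block sequence `p₀ - T p₁, p₂ - T p₃, …`, each term of which has its negative within norm
one of a sum of the two blocks under `-T`. -/
def subTetrisPairs (P : ℕ → ℕ → ℤ) (l : ℕ) : ℕ → ℤ := P (2 * l) + negT (P (2 * l + 1))

lemma isBlockSeq_subTetrisPairs (hP : IsBlockSeq k P) : IsBlockSeq k (subTetrisPairs P) := by
  have isBlockSeq_sum := hP.sum_Ico (N := fun l => 2 * l) (J := fun _ i => i % 2)
    (fun _ _ h => Nat.mul_le_mul_left 2 h) fun l => ⟨2 * l, by simp, by simp⟩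
  convert isBlockSeq_sum using 2 with l
  simp [subTetrisPairs, mul_add, Finset.sum_Ico_succ_top, Nat.add_mod]

lemma InSpanPM.exists_eq_sum (hP : ∀ n, IsFin k (P n)) (hq : InSpanPM k P q) :
    ∃ (s : Finset ℕ) (δ : ℕ → ℤ) (j : ℕ → ℕ), (∀ l, δ l = 1 ∨ δ l = -1) ∧ (∀ l ∈ s, j l < k) ∧
      (∃ l ∈ s, j l = 0) ∧ ∀ t, s ⊆ t → q = ∑ l ∈ t, δ l • negT^[j l] (P l) := by
  obtain ⟨m, n, ε, j, hn, hε, hj, ⟨i₀, hi₀⟩, rfl⟩ := hq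
  let δ := extend n (fun i => ε i * (-1) ^ j i) 1
  let j' := extend n j fun _ => k
  have hδ (i) : δ (n i) = ε i * (-1) ^ j i := hn.injective.extend_apply _ _ i
  have hj' (i) : j' (n i) = j i := hn.injective.extend_apply _ _ i
  refine ⟨Finset.univ.map ⟨n, hn.injective⟩, δ, j', fun l => ?_, by simpa [hj'] using hj,
    ⟨n i₀, by simp, (hj' i₀).trans hi₀⟩, fun t ht => ?_⟩
  · by_cases hl : ∃ i, n i = l
    · obtain ⟨i, rfl⟩ := hl
      rw [hδ]
      rcases hε i with h | h <;> rcases neg_one_pow_eq_or ℤ (j i) with h' | h' <;> simp [h, h']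
    · exact Or.inl (extend_apply' _ _ _ hl)
  · rw [← Finset.sum_subset ht, Finset.sum_map]
    · refine Finset.sum_congr rfl fun i _ => ?_
      simp only [Embedding.coeFn_mk, hδ, hj', negT_iterate_eq_smul, smul_smul, mul_assoc,
        ← mul_pow, neg_one_mul, neg_neg, one_pow, mul_one]
    · intro l _ hl
      have : j' l = k := extend_apply' _ _ _ (by simpa using hl)
      rw [this, (hP l).negT_iterate_eq_zero le_rfl, smul_zero]

lemma exists_monotone_forall_subset_Ico {s : ℕ → Finset ℕ} (nonempty : ∀ m, (s m).Nonempty)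
    (lt : ∀ m, ∀ i ∈ s m, ∀ j ∈ s (m + 1), i < j) :
    ∃ N : ℕ → ℕ, N 0 = 0 ∧ Monotone N ∧ ∀ m, s m ⊆ Finset.Ico (N m) (N (m + 1)) := by
  let N (m : ℕ) : ℕ := m.casesOn 0 fun m => (s m).sup (· + 1)
  have subset (m : ℕ) : s m ⊆ Finset.Ico (N m) (N (m + 1)) := fun j hj =>
    Finset.mem_Ico.2 ⟨by
      cases m with
      | zero => exact j.zero_le
      | succ m => exact Finset.sup_le fun i hi => lt m i hi j hj,
    Finset.le_sup (f := (· + 1)) hj⟩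
  refine ⟨N, rfl, monotone_nat_of_le_succ fun m => ?_, subset⟩
  obtain ⟨i, hi⟩ := nonempty m
  exact (Finset.nonempty_Ico.1 ⟨i, subset m hi⟩).le

lemma IsBlockSeq.exists_eq_sum_Ico (hP : IsBlockSeq k P) (hQ : IsBlockSeq k Q)
    (hPQ : ∀ m, InSpanPM k P (Q m)) :
    ∃ (N : ℕ → ℕ) (δ : ℕ → ℕ → ℤ) (j : ℕ → ℕ → ℕ), N 0 = 0 ∧ Monotone N ∧
      (∀ m l, δ m l = 1 ∨ δ m l = -1) ∧
      (∀ m, ∃ l ∈ Finset.Ico (N m) (N (m + 1)), j m l = 0) ∧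
      ∀ m, Q m = ∑ l ∈ Finset.Ico (N m) (N (m + 1)), δ m l • negT^[j m l] (P l) := by
  choose s δ j hδ hj hj0 hQs using fun m => (hPQ m).exists_eq_sum hP.1
  choose peak hpeak using fun l => (isFin_iff.1 (hP.1 l)).2.2
  have ne_zero_at_peak (m l : ℕ) (hl : l ∈ s m) : Q m (peak l) ≠ 0 := by
    rw [hQs m _ subset_rfl]
    exact hP.sum_apply_ne_zero hl (by rcases hδ m l with h | h <;> simp [h]) (hj m l hl) (hpeak l)
  have P_peak_ne_zero (m l : ℕ) (hl : l ∈ s m) : P l (peak l) ≠ 0 := by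
    have := hj m l hl
    have := hpeak l
    omega
  obtain ⟨N, hN0, hN, hsN⟩ := exists_monotone_forall_subset_Ico (s := s)
    (fun m => (hj0 m).imp fun _ h => h.1) fun m l hl l' hl' => by
      have peak_lt : peak l < peak l' := hQ.2 m (m + 1) m.lt_succ_self _ _
        (ne_zero_at_peak m l hl) (ne_zero_at_peak (m + 1) l' hl')
      by_contra! hle
      rcases hle.eq_or_lt with rfl | hlt
      · exact peak_lt.false
      · exact peak_lt.not_gt (hP.2 l' l hlt _ _ (P_peak_ne_zero _ _ hl') (P_peak_ne_zero _ _ hl))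
  exact ⟨N, δ, j, hN0, hN, hδ, fun m => (hj0 m).imp fun l h => ⟨hsN m h.1, h.2⟩,
    fun m => hQs m _ (hsN m)⟩

lemma support_negT_iterate_add_negT_subset (j : ℕ) (p : ℕ → ℤ) :
    support (negT^[j] p + negT (negT^[j] p)) ⊆ support p := by
  rw [← iterate_succ_apply' negT]
  exact (support_add _ _).trans (union_subset (support_negT_iterate_subset j p)
    (support_negT_iterate_subset (j + 1) p))

/-- With `a = (-T)^j p` and `b = (-T)^j q`, the span of `p, q` under `-T` contains `a - T b` itself,
while it approximates the negative `-a + T b` by `-T a + b`. -/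
lemma exists_normLe_smul_negT_iterate_sub (h : Disjoint (support p) (support q))
    (hδ : δ = 1 ∨ δ = -1) (j : ℕ) :
    ∃ u v, (u = j ∨ v = j) ∧
      normLe (δ • negT^[j] (p + negT q) - (negT^[u] p + negT^[v] q)) 1 ∧
      support (δ • negT^[j] (p + negT q) - (negT^[u] p + negT^[v] q)) ⊆
        support p ∪ support q := by
  set a := negT^[j] p
  set b := negT^[j] q
  have ha : support (a + negT a) ⊆ support p := support_negT_iterate_add_negT_subset j p
  have hb : support (b + negT b) ⊆ support q := support_negT_iterate_add_negT_subset j q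
  have expand : negT^[j] (p + negT q) = a + negT b := by
    rw [negT_iterate_add (q := negT q) (h.mono_right (support_negT_iterate_subset 1 q)),
      ← iterate_succ_apply, iterate_succ_apply']
  rcases hδ with rfl | rfl
  · refine ⟨j, j + 1, Or.inl rfl, ?_⟩
    rw [iterate_succ_apply', one_smul, expand, sub_self]
    simp [normLe]
  · refine ⟨j + 1, j, Or.inr rfl, ?_⟩
    have eq : (-1 : ℤ) • negT^[j] (p + negT q) - (negT^[j + 1] p + negT^[j] q) =
        -((a + negT a) + (b + negT b)) := by
      rw [iterate_succ_apply', expand, neg_one_smul]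
      abel
    rw [eq, support_neg]
    exact ⟨normLe_neg (normLe_add (h.mono ha hb) (normLe_add_negT a) (normLe_add_negT b)),
      (support_add _ _).trans (union_subset_union ha hb)⟩

lemma sum_Ico_two_mul {M : Type*} [AddCommMonoid M] (f : ℕ → M) {a b : ℕ} (h : a ≤ b) :
    ∑ i ∈ Finset.Ico (2 * a) (2 * b), f i = ∑ l ∈ Finset.Ico a b, (f (2 * l) + f (2 * l + 1)) := by
  induction b, h using Nat.le_induction with
  | base => simp
  | succ b h ih =>
    rw [Finset.sum_Ico_succ_top h, ← ih, mul_add, Finset.sum_Ico_succ_top (by omega),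
      Finset.sum_Ico_succ_top (by omega), add_assoc]

lemma IsBlockSeq.exists_normLe_sum_subTetrisPairs_sub (hP : IsBlockSeq k P) {δ : ℕ → ℤ}
    (hδ : ∀ l, δ l = 1 ∨ δ l = -1) (j : ℕ → ℕ) :
    ∃ J : ℕ → ℕ, (∀ l, J (2 * l) = j l ∨ J (2 * l + 1) = j l) ∧ ∀ a b, a ≤ b →
      normLe (∑ l ∈ Finset.Ico a b, δ l • negT^[j l] (subTetrisPairs P l) -
        ∑ i ∈ Finset.Ico (2 * a) (2 * b), negT^[J i] (P i)) 1 := by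
  have disjoint := hP.pairwise_disjoint_support
  choose u v huv norm_le support_subset using fun l =>
    exists_normLe_smul_negT_iterate_sub (disjoint (2 * l).succ_ne_self.symm) (hδ l) (j l)
  let J (i : ℕ) : ℕ := if Even i then u (i / 2) else v (i / 2)
  have J_even (l : ℕ) : J (2 * l) = u l := by simp [J]
  have J_odd (l : ℕ) : J (2 * l + 1) = v l := by simp [J, Nat.mul_add_div]
  refine ⟨J, fun l => by rw [J_even, J_odd]; exact huv l, fun a b hab => ?_⟩
  rw [sum_Ico_two_mul _ hab, ← Finset.sum_sub_distrib]
  simp only [J_even, J_odd]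
  refine normLe_sum (fun l _ l' _ hll' => ?_) fun l _ => norm_le l
  refine Disjoint.mono (support_subset l) (support_subset l') ?_
  simp only [disjoint_union_left, disjoint_union_right]
  refine ⟨⟨disjoint ?_, disjoint ?_⟩, disjoint ?_, disjoint ?_⟩ <;> omega

theorem IsBlockSeq.exists_normLe_sub_sum_Ico (hP : IsBlockSeq k P) (hQ : IsBlockSeq k Q)
    (hPQ : ∀ m, InSpanPM k (subTetrisPairs P) (Q m)) :
    ∃ (N : ℕ → ℕ) (J : ℕ → ℕ → ℕ), N 0 = 0 ∧ Monotone N ∧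
      (∀ m, ∃ i ∈ Finset.Ico (N m) (N (m + 1)), J m i = 0) ∧
      ∀ m, normLe (Q m - ∑ i ∈ Finset.Ico (N m) (N (m + 1)), negT^[J m i] (P i)) 1 := by
  obtain ⟨N, δ, j, hN0, hN, hδ, hj, hQ_eq⟩ :=
    (isBlockSeq_subTetrisPairs hP).exists_eq_sum_Ico hQ hPQ
  choose J hJ norm_le using fun m => hP.exists_normLe_sum_subTetrisPairs_sub (hδ m) (j m)
  refine ⟨fun m => 2 * N m, J, by simp [hN0], fun m n h => Nat.mul_le_mul_left 2 (hN h),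
    fun m => ?_, fun m => hQ_eq m ▸ norm_le m _ _ (hN m.le_succ)⟩
  obtain ⟨l, hl, hl0⟩ := hj m
  rw [Finset.mem_Ico] at hl
  dsimp only
  rcases hJ m l with h | h
  · exact ⟨2 * l, Finset.mem_Ico.2 (by omega), h.trans hl0⟩
  · exact ⟨2 * l + 1, Finset.mem_Ico.2 (by omega), h.trans hl0⟩

end Approximation

/-- For every `k, r ≥ 1` and every Souslin measurable colouring
`c : FIN_{±k}^[∞] → r` (metrizable topology) there are `i < r` and
`P ∈ FIN_{±k}^[∞]` with `⟨P⟩_{±k}^[∞] ⊆ (c⁻¹{i})₁`. -/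
theorem gowers_infinite_dimensional (k r : ℕ) (hk : 1 ≤ k) (hr : 1 ≤ r)
    (c : BlockSeq k → Fin r) (hc : ∀ i : Fin r, SouslinMeasurable (c ⁻¹' {i})) :
    ∃ (i : Fin r) (P : BlockSeq k),
      ∀ Q : BlockSeq k, (∀ n, InSpanPM k P.1 (Q.1 n)) →
        ∃ R : BlockSeq k, c R = i ∧ ∀ n, normLe (Q.1 n - R.1 n) 1 := by
  obtain ⟨𝒰, h𝒰, idem⟩ := exists_isTetrisIdempotent k
  have := neBot_treeFilter_nil hk h𝒰 idem
  obtain ⟨i, hi⟩ := exists_preimage_singleton_mem_treeFilter (s := []) fun i => (hc i).isRamsey 𝒰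
  obtain ⟨P, hP⟩ := exists_blockSeq_forall_sum_Ico_mem hk h𝒰 idem hi
  refine ⟨i, ⟨subTetrisPairs P.1, isBlockSeq_subTetrisPairs P.2⟩, fun Q hQ => ?_⟩
  obtain ⟨N, J, hN0, hN, hJ, norm_le⟩ := P.2.exists_normLe_sub_sum_Ico Q.2 hQ
  exact ⟨⟨_, P.2.sum_Ico hN hJ⟩, hP N J hN0 hN _ fun _ => rfl, norm_le⟩
end

section
/- For every k ∈ ℕ, k ≥ 1, there exists a cofinite ultrafilter 𝒰 on FIN_{±k} such that 𝒰 + (−T)^j 𝒰 = (−T)^j 𝒰 + 𝒰 = 𝒰 for all j ∈ {0, …, k}, and moreover 𝒰 is subsymmetric: for every A ∈ 𝒰, the set −(A)₁ belongs to 𝒰. -/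
open Function Set

/-!
Ultrafilters on finitely supported functions that escape to infinity form a compact right
topological monoid. Since almost all pairs of such functions have disjoint supports, `-T` acts on it
by a continuous endomorphism `τ`. The subsymmetric ultrafilters on `FIN_{±k}` form a closed set `S`
containing `S + S`, `S + τ S` and `τ S + S`, and `τ ^ k` vanishes on `S`. By induction on `k`, there
is `u ∈ τ S` absorbing all its iterates. The fiber of `S` over `u` is stable under adding `u` on
either side, so it contains an idempotent of the form `v + u`, and then `u + (v + u)` absorbs all
its iterates.

For `S ≠ ∅`, place the coefficients `0, -1, 2, -3, …, ±k, …, 2, -1, 0` on successive points tending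
to infinity. Dropping the initial or the final `0` gives the same ultrafilter, while the two
truncations are negatives of each other up to `1`, because consecutive coefficients are.
-/

open Filter
open scoped SetRel

section Semigroup

variable {M : Type*} [TopologicalSpace M] [T2Space M]

theorem exists_idempotent_absorbing [AddSemigroup M]
    (hM : ∀ r : M, Continuous (· + r)) {u : M} (hu : u + u = u)
    {Y : Set M} (hYc : IsCompact Y) (hYne : Y.Nonempty) (hYY : ∀ᵉ (v ∈ Y) (w ∈ Y), v + w ∈ Y)
    (hYu : ∀ v ∈ Y, v + u ∈ Y) (huY : ∀ v ∈ Y, u + v ∈ Y) :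
    ∃ w ∈ Y, w + w = w ∧ w + u = w ∧ u + w = w := by
  obtain ⟨_, ⟨v, hv, rfl⟩, hidem⟩ := exists_idempotent_in_compact_add_subsemigroup hM
    ((· + u) '' Y) (hYne.image _) (hYc.image (hM u)) (by
      rintro _ ⟨v, hv, rfl⟩ _ ⟨w, hw, rfl⟩
      exact ⟨v + u + w, hYY _ (hYu v hv) w hw, add_assoc _ _ _⟩)
  have hvu : v + u + u = v + u := by rw [add_assoc, hu]
  refine ⟨u + (v + u), huY _ (hYu v hv), ?_, ?_, ?_⟩
  · rw [add_assoc u, ← add_assoc (v + u) u, hvu, hidem]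
  · rw [add_assoc, hvu]
  · rw [← add_assoc, hu]

theorem exists_idempotent_absorbing_map_eq [AddSemigroup M] {F : Type*} [FunLike F M M]
    [AddHomClass F M M] (hM : ∀ r : M, Continuous (· + r)) (τ : F) (hτ : Continuous τ)
    {S : Set M} (hSc : IsCompact S) (hSS : ∀ᵉ (x ∈ S) (y ∈ S), x + y ∈ S)
    (hSτ : ∀ᵉ (x ∈ S) (y ∈ S), x + τ y ∈ S) (hτS : ∀ᵉ (x ∈ S) (y ∈ S), τ x + y ∈ S)
    {x : M} (hx : x ∈ S) (hidem : τ x + τ x = τ x) (hright : τ x + τ (τ x) = τ x)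
    (hleft : τ (τ x) + τ x = τ x) :
    ∃ w ∈ S, τ w = τ x ∧ w + w = w ∧ w + τ x = w ∧ τ x + w = w := by
  obtain ⟨w, ⟨hwS, hwx⟩, hw⟩ := exists_idempotent_absorbing hM hidem
    (Y := S ∩ τ ⁻¹' {τ x}) (hSc.inter_right (isClosed_singleton.preimage hτ)) ⟨x, hx, rfl⟩
    (fun v ⟨hv, hvx⟩ w ⟨hw, hwx⟩ => ⟨hSS v hv w hw, by
      rw [mem_preimage, map_add, hvx, hwx]; exact hidem⟩)
    (fun v ⟨hv, hvx⟩ => ⟨hSτ v hv x hx, by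
      rw [mem_preimage, map_add, hvx]; exact hright⟩)
    (fun v ⟨hv, hvx⟩ => ⟨hτS x hx v hv, by
      rw [mem_preimage, map_add, hvx]; exact hleft⟩)
  exact ⟨w, hwS, hwx, hw⟩

theorem exists_absorbing_iterates [AddMonoid M] (hM : ∀ r : M, Continuous (· + r))
    (τ : AddMonoid.End M) (hτ : Continuous τ) {S : Set M} (hSc : IsCompact S)
    (hSne : S.Nonempty) (hSS : ∀ᵉ (x ∈ S) (y ∈ S), x + y ∈ S)
    (hSτ : ∀ᵉ (x ∈ S) (y ∈ S), x + τ y ∈ S) (hτS : ∀ᵉ (x ∈ S) (y ∈ S), τ x + y ∈ S)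
    {k : ℕ} (hk : ∀ x ∈ S, (τ ^ k) x = 0) :
    ∃ u ∈ S, ∀ i, u + (τ ^ i) u = u ∧ (τ ^ i) u + u = u := by
  induction k generalizing S with
  | zero =>
    obtain ⟨x, hx⟩ := hSne
    obtain rfl : x = 0 := hk x hx
    exact ⟨0, hx, fun i => by simp⟩
  | succ k ih =>
    obtain ⟨_, ⟨x, hx, rfl⟩, hu⟩ := ih (S := τ '' S) (hSc.image hτ) (hSne.image τ)
      (by
        rintro _ ⟨x, hx, rfl⟩ _ ⟨y, hy, rfl⟩
        exact ⟨x + y, hSS x hx y hy, map_add τ x y⟩)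
      (by
        rintro _ ⟨x, hx, rfl⟩ _ ⟨y, hy, rfl⟩
        exact ⟨x + τ y, hSτ x hx y hy, map_add τ x (τ y)⟩)
      (by
        rintro _ ⟨x, hx, rfl⟩ _ ⟨y, hy, rfl⟩
        exact ⟨τ x + y, hτS x hx y hy, map_add τ (τ x) y⟩)
      (by
        rintro _ ⟨x, hx, rfl⟩
        exact hk x hx)
    obtain ⟨w, hwS, hwx, hww, hright, hleft⟩ := exists_idempotent_absorbing_map_eq hM τ hτ hSc
      hSS hSτ hτS hx (hu 0).1 (hu 1).1 (hu 1).2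
    refine ⟨w, hwS, fun i => ?_⟩
    cases i with
    | zero => exact ⟨hww, hww⟩
    | succ i =>
      have hpow : (τ ^ (i + 1)) w = (τ ^ i) (τ x) := congrArg (τ ^ i) hwx
      rw [hpow]
      constructor
      · rw [← hright, add_assoc, (hu i).1]
      · rw [← hleft, ← add_assoc, (hu i).2]

end Semigroup

section Ultrafilter

variable {α β : Type*}

theorem continuous_ultrafilter_map (f : α → β) : Continuous (Ultrafilter.map f) :=
  ultrafilterBasis_is_basis.continuous_iff.2 <| forall_mem_range.2 fun s =>
    ultrafilter_isOpen_basic (f ⁻¹' s)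

theorem isClosed_setOf_rtendsto' (r : SetRel α β) :
    IsClosed {x : Ultrafilter α × Ultrafilter β | RTendsto' r x.1 x.2} := by
  simp only [rtendsto'_def, ofPred_forall]
  exact isClosed_iInter fun s => isClosed_imp
    ((ultrafilter_isOpen_basic s).preimage continuous_snd)
    ((ultrafilter_isClosed_basic (r.preimage s)).preimage continuous_fst)

theorem rtendsto'_map {γ δ : Type*} {r : SetRel α β} {s : SetRel γ δ} {f : α → γ} {g : β → δ}
    (hfg : ∀ a b, a ~[r] b → f a ~[s] g b) {l₁ : Filter α} {l₂ : Filter β}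
    (h : RTendsto' r l₁ l₂) : RTendsto' s (map f l₁) (map g l₂) := by
  rw [rtendsto'_def] at h ⊢
  intro A hA
  rw [mem_map]
  filter_upwards [h _ hA] with a ⟨b, hb, hab⟩ using ⟨g b, hb, hfg a b hab⟩

attribute [local instance] Ultrafilter.add Ultrafilter.addSemigroup

/-- The monoid structure on ultrafilters on `α` extending `Ultrafilter.addSemigroup`; its zero is
the principal ultrafilter at `0`. -/
abbrev ultrafilterAddMonoid [AddMonoid α] : AddMonoid (Ultrafilter α) where
  __ := Ultrafilter.addSemigroup
  zero := (pure 0 : Ultrafilter α)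
  zero_add U := Ultrafilter.ext fun s => by
    change {a | 0 + a ∈ s} ∈ U ↔ s ∈ U
    simp
  add_zero U := Ultrafilter.ext fun s => by
    change {a | a + 0 ∈ s} ∈ U ↔ s ∈ U
    simp
  nsmul := @nsmulRec _ ⟨(pure 0 : Ultrafilter α)⟩ _

end Ultrafilter

attribute [local instance] ultrafilterAddMonoid

section Escaping

variable {ι G H : Type*}

variable (ι) in
/-- The coordinatewise lift of a relation to functions on `ι`. -/
def pointwiseRel (r : SetRel G H) : SetRel (ι → G) (ι → H) :=
  {x | ∀ i, x.1 i ~[r] x.2 i}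

theorem pointwiseRel_comp {G' H' : Type*} {r : SetRel G H} {s : SetRel G' H'} {f : G → G'}
    {g : H → H'} (hfg : ∀ a b, a ~[r] b → f a ~[s] g b) {p : ι → G} {q : ι → H}
    (h : p ~[pointwiseRel ι r] q) : (f ∘ p) ~[pointwiseRel ι s] (g ∘ q) :=
  fun i => hfg _ _ (h i)

variable [AddMonoid G] [AddMonoid H]

variable (ι G) in
/-- The ultrafilters on `ι → G` that concentrate on finitely supported functions and, for each
index `i`, on the functions vanishing at `i`. For such ultrafilters almost all pairs of functions
have disjoint supports. -/
def escapingUltrafilters : AddSubmonoid (Ultrafilter (ι → G)) where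
  carrier := {U | (∀ᶠ p : ι → G in U, (support p).Finite) ∧ ∀ i, ∀ᶠ p : ι → G in U, p i = 0}
  zero_mem' := by
    change (support (0 : ι → G)).Finite ∧ ∀ i, (0 : ι → G) i = 0
    simp
  add_mem' := by
    rintro U V ⟨hU, hU'⟩ ⟨hV, hV'⟩
    refine ⟨?_, fun i => ?_⟩
    · rw [Ultrafilter.eventually_add]
      filter_upwards [hU] with p hp
      filter_upwards [hV] with q hq
      exact (hp.union hq).subset (support_add p q)
    · rw [Ultrafilter.eventually_add]
      filter_upwards [hU' i] with p hp
      filter_upwards [hV' i] with q hq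
      simp [hp, hq]

namespace escapingUltrafilters

theorem eventually_add {U V : escapingUltrafilters ι G} {P : (ι → G) → Prop} :
    (∀ᶠ x in (U + V).1, P x) ↔ ∀ᶠ p in U.1, ∀ᶠ q in V.1, P (p + q) :=
  Iff.rfl

protected theorem eventually_zero {P : (ι → G) → Prop} :
    (∀ᶠ x in (0 : escapingUltrafilters ι G).1, P x) ↔ P 0 :=
  Iff.rfl

theorem eventually_forall_mem_eq_zero (U : escapingUltrafilters ι G) {s : Set ι}
    (hs : s.Finite) : ∀ᶠ p : ι → G in U.1, ∀ i ∈ s, p i = 0 :=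
  (eventually_all_finite hs).2 fun i _ => U.2.2 i

theorem eventually_disjoint_support (U V : escapingUltrafilters ι G) :
    ∀ᶠ p : ι → G in U.1, ∀ᶠ q : ι → G in V.1, ∀ i, p i = 0 ∨ q i = 0 := by
  filter_upwards [U.2.1] with p hp
  filter_upwards [eventually_forall_mem_eq_zero V hp] with q hq i
  exact or_iff_not_imp_left.2 (hq i)

theorem isClosed : IsClosed (escapingUltrafilters ι G : Set (Ultrafilter (ι → G))) := by
  have hzero : IsClosed {U : Ultrafilter (ι → G) | ∀ i, ∀ᶠ p : ι → G in U, p i = 0} := by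
    rw [ofPred_forall]
    exact isClosed_iInter fun i => ultrafilter_isClosed_basic {p : ι → G | p i = 0}
  exact (ultrafilter_isClosed_basic {p : ι → G | (support p).Finite}).inter hzero

instance : CompactSpace (escapingUltrafilters ι G) :=
  isCompact_iff_compactSpace.1 isClosed.isCompact

protected theorem continuous_add_const (V : escapingUltrafilters ι G) : Continuous (· + V) :=
  ((Ultrafilter.continuous_add_left V.1).comp continuous_subtype_val).subtype_mk _

/-- The pushforward of escaping ultrafilters along `p ↦ f ∘ p`. It is additive even though `f` need
not be, because `f ∘ ·` is additive on pairs of functions with disjoint supports. -/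
def map (f : ZeroHom G H) : escapingUltrafilters ι G →+ escapingUltrafilters ι H where
  toFun U := ⟨U.1.map (f ∘ ·), by
    refine ⟨?_, fun i => ?_⟩
    · exact eventually_map.2 <| U.2.1.mono fun p hp =>
        hp.subset (support_comp_subset f.map_zero p)
    · exact eventually_map.2 <| (U.2.2 i).mono fun p hp => by simp [hp]⟩
  map_zero' := Subtype.ext <| Ultrafilter.ext fun A => by
    have hzero : f ∘ (0 : ι → G) = 0 := funext fun _ => f.map_zero
    change f ∘ (0 : ι → G) ∈ A ↔ (0 : ι → H) ∈ A
    rw [hzero]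
  map_add' U V := Subtype.ext <| Ultrafilter.eq_of_le fun A hA => by
    change ∀ᶠ p in U.1, ∀ᶠ q in V.1, f ∘ (p + q) ∈ A
    change ∀ᶠ p in U.1, ∀ᶠ q in V.1, f ∘ p + f ∘ q ∈ A at hA
    filter_upwards [hA, eventually_disjoint_support U V] with p hp hpq
    filter_upwards [hp, hpq] with q hq hdisj
    convert hq using 1
    funext i
    rcases hdisj i with h | h <;> simp [h]

theorem continuous_map (f : ZeroHom G H) : Continuous (map (ι := ι) f) :=
  ((continuous_ultrafilter_map (f ∘ ·)).comp continuous_subtype_val).subtype_mk _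

variable (ι) in
/-- The ultrafilter of the functions `Pi.single i g` as `i` tends to infinity. -/
noncomputable def single [Infinite ι] [DecidableEq ι] (g : G) : escapingUltrafilters ι G :=
  ⟨(hyperfilter ι).map fun i => (Pi.single i g : ι → G), by
    refine ⟨eventually_map.2 <| .of_forall fun i =>
      (finite_singleton i).subset Pi.support_single_subset, fun i => ?_⟩
    refine eventually_map.2 <| hyperfilter_le_cofinite ?_
    filter_upwards [(finite_singleton i).compl_mem_cofinite] with j hj
    exact Pi.single_eq_of_ne' (M := fun _ => G) hj g⟩

theorem single_zero [Infinite ι] [DecidableEq ι] : single ι (0 : G) = 0 :=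
  Subtype.ext <| Ultrafilter.ext fun A => by
    change (∀ᶠ i : ι in hyperfilter ι, (Pi.single i 0 : ι → G) ∈ A) ↔ (0 : ι → G) ∈ A
    simp

theorem rtendsto'_add {r : SetRel G H} {U U' : escapingUltrafilters ι G}
    {V V' : escapingUltrafilters ι H} (h : RTendsto' (pointwiseRel ι r) U.1 V.1)
    (h' : RTendsto' (pointwiseRel ι r) U'.1 V'.1) :
    RTendsto' (pointwiseRel ι r) (U + U').1 (V + V').1 := by
  rw [rtendsto'_def] at h h' ⊢
  intro A hA
  rw [← eventually_mem_set, eventually_add] at hA ⊢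
  filter_upwards [U.2.1, h _ (hA.and V.2.1)] with p hp ⟨q, ⟨hqA, hq⟩, hpq⟩
  have hfin := hp.union hq
  filter_upwards [eventually_forall_mem_eq_zero U' hfin,
    h' _ (hqA.and (eventually_forall_mem_eq_zero V' hfin))]
    with p' hp' ⟨q', ⟨hqA', hq'⟩, hpq'⟩
  refine ⟨q + q', hqA', fun i => ?_⟩
  by_cases hi : i ∈ support p ∪ support q
  · simpa [hp' i hi, hq' i hi] using hpq i
  · obtain ⟨hpi, hqi⟩ : p i = 0 ∧ q i = 0 := by simpa using hi
    simpa [hpi, hqi] using hpq' i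

theorem rtendsto'_single [Infinite ι] [DecidableEq ι] {r : SetRel G H} {a : G} {b : H}
    (h₀ : 0 ~[r] 0) (h : a ~[r] b) :
    RTendsto' (pointwiseRel ι r) (single ι a).1 (single ι b).1 := by
  rw [rtendsto'_def]
  intro A hA
  refine eventually_map.2 ((eventually_map.1 hA).mono fun i hi => ⟨_, hi, fun j => ?_⟩)
  by_cases hj : j = i
  · subst hj; simpa using h
  · simpa [hj] using h₀

theorem rtendsto'_zero {r : SetRel G H} (h₀ : 0 ~[r] 0) :
    RTendsto' (pointwiseRel ι r) (0 : escapingUltrafilters ι G).1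
      (0 : escapingUltrafilters ι H).1 :=
  (rtendsto'_def _ _ _).2 fun _ hA => ⟨0, hA, fun _ => h₀⟩

theorem rtendsto'_sum_single [Infinite ι] [DecidableEq ι] {r : SetRel G H} (h₀ : 0 ~[r] 0)
    {a : ℕ → G} {b : ℕ → H} (h : ∀ i, a i ~[r] b i) (n : ℕ) :
    RTendsto' (pointwiseRel ι r) ((List.range n).map fun i => single ι (a i)).sum.1
      ((List.range n).map fun i => single ι (b i)).sum.1 := by
  induction n with
  | zero => exact rtendsto'_zero h₀
  | succ n ih =>
    rw [List.sum_range_succ, List.sum_range_succ]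
    exact rtendsto'_add ih (rtendsto'_single h₀ (h n))

end escapingUltrafilters

end Escaping

open escapingUltrafilters

section IsFin

theorem isFin_zero : IsFin 0 0 := ⟨by simp, by simp, 0, by simp⟩

theorem isFin_single (n : ℕ) (a : ℤ) : IsFin a.natAbs (Pi.single n a) := by
  refine ⟨(finite_singleton n).subset Pi.support_single_subset, fun i => ?_, n, by simp⟩
  by_cases h : i = n
  · subst h; simp
  · simp [h]

theorem IsFin.eq_zero_s2 {p : ℕ → ℤ} (hp : IsFin 0 p) : p = 0 :=
  funext fun n => by simpa using hp.2.1 n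

theorem IsFin.add_s2 {i j : ℕ} {p q : ℕ → ℤ} (hp : IsFin i p) (hq : IsFin j q)
    (hpq : ∀ n, p n = 0 ∨ q n = 0) : IsFin (max i j) (p + q) := by
  have habs (n : ℕ) : |(p + q) n| = max |p n| |q n| := by
    rcases hpq n with h | h <;> simp [h]
  obtain ⟨hpfin, hpb, a, ha⟩ := hp
  obtain ⟨hqfin, hqb, b, hb⟩ := hq
  refine ⟨(hpfin.union hqfin).subset (support_add p q), fun n => ?_, ?_⟩
  · rw [habs, Nat.cast_max]
    exact max_le_max (hpb n) (hqb n)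
  · rcases le_total i j with hij | hij
    · refine ⟨b, ?_⟩
      have := hpb b
      rw [habs]
      omega
    · refine ⟨a, ?_⟩
      have := hqb a
      rw [habs]
      omega

/-- The operation that `negT` applies to each value. -/
def negTetris : ZeroHom ℤ ℤ where
  toFun x := -(if 0 < x then x - 1 else if x < 0 then x + 1 else 0)
  map_zero' := by simp

theorem negT_eq_comp (p : ℕ → ℤ) : negT p = negTetris ∘ p := rfl

theorem abs_negTetris (x : ℤ) : |negTetris x| = max (|x| - 1) 0 := by
  simp only [negTetris, ZeroHom.coe_mk]
  grind

theorem IsFin.negT {k : ℕ} {p : ℕ → ℤ} (hp : IsFin k p) : IsFin (k - 1) (negT p) := by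
  obtain ⟨hfin, hb, a, ha⟩ := hp
  rw [negT_eq_comp]
  refine ⟨hfin.subset (support_comp_subset negTetris.map_zero p), fun n => ?_, a, ?_⟩
  · have := hb n
    rw [comp_apply, abs_negTetris]
    omega
  · rw [comp_apply, abs_negTetris]
    omega

theorem eventually_isFin_add {i j : ℕ} {U V : escapingUltrafilters ℕ ℤ}
    (hU : ∀ᶠ p in U.1, IsFin i p) (hV : ∀ᶠ p in V.1, IsFin j p) :
    ∀ᶠ p in (U + V).1, IsFin (max i j) p := by
  rw [eventually_add]
  filter_upwards [hU, eventually_disjoint_support U V] with p hp hpV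
  filter_upwards [hV, hpV] with q hq hpq using hp.add_s2 hq hpq

theorem eventually_isFin_single (a : ℤ) : ∀ᶠ p in (single ℕ a).1, IsFin a.natAbs p :=
  eventually_map.2 <| .of_forall fun n => isFin_single n a

theorem eventually_isFin_sum_single (c : ℕ → ℤ) (n : ℕ) :
    ∀ᶠ p in ((List.range n).map fun i => single ℕ (c i)).sum.1,
      IsFin ((Finset.range n).sup fun i => (c i).natAbs) p := by
  induction n with
  | zero => exact escapingUltrafilters.eventually_zero.2 isFin_zero
  | succ n ih =>
    rw [List.sum_range_succ, Finset.range_add_one, Finset.sup_insert, sup_comm]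
    exact eventually_isFin_add ih (eventually_isFin_single (c n))

end IsFin

section Gowers

theorem isCofiniteUF_of_eventually_isFin {k : ℕ} {U : escapingUltrafilters ℕ ℤ}
    (hU : ∀ᶠ p in U.1, IsFin k p) : IsCofiniteUF k U :=
  ⟨hU, fun m => eventually_forall_mem_eq_zero U (finite_lt_nat m)⟩

theorem eventually_blockLt_s2 (U V : escapingUltrafilters ℕ ℤ) :
    ∀ᶠ p in U.1, ∀ᶠ q in V.1, BlockLt p q := by
  filter_upwards [U.2.1] with p hp
  obtain ⟨m, hm⟩ := hp.bddAbove
  filter_upwards [eventually_forall_mem_eq_zero V (finite_le_nat m)] with q hq a b ha hb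
  exact (hm ha).trans_lt (not_le.1 fun hbm => hb (hq b hbm))

theorem sumMem_iff (U V : escapingUltrafilters ℕ ℤ) (A : Set (ℕ → ℤ)) :
    SumMem U V A ↔ A ∈ (U + V).1 := by
  change (∀ᶠ p in U.1, ∀ᶠ q in V.1, BlockLt p q ∧ p + q ∈ A) ↔
    ∀ᶠ p in U.1, ∀ᶠ q in V.1, p + q ∈ A
  refine eventually_congr ?_
  filter_upwards [eventually_blockLt_s2 U V] with p hp
  refine eventually_congr ?_
  filter_upwards [hp] with q hq using and_iff_right hq

/-- The endomorphism `U ↦ (-T) U` of the monoid of escaping ultrafilters. -/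
def negTEnd : AddMonoid.End (escapingUltrafilters ℕ ℤ) :=
  escapingUltrafilters.map negTetris

theorem coe_negTEnd_pow (j : ℕ) (U : escapingUltrafilters ℕ ℤ) :
    ((negTEnd ^ j) U : Ultrafilter (ℕ → ℤ)) = Ultrafilter.map negT^[j] U := by
  induction j with
  | zero => exact (Ultrafilter.map_id _).symm
  | succ j ih =>
    rw [iterate_succ', ← Ultrafilter.map_map, ← ih, pow_succ']
    rfl

/-- The relation `|-a - b| ≤ 1`. On functions it lifts to `‖-p - q‖ ≤ 1`, which is the relation
defining subsymmetry. -/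
def nearNeg : SetRel ℤ ℤ := {x | |x.1 + x.2| ≤ 1}

theorem nearNeg_negTetris (a b : ℤ) (h : a ~[nearNeg] b) :
    negTetris a ~[nearNeg] negTetris b := by
  change |a + b| ≤ 1 at h
  change |(-(if 0 < a then a - 1 else if a < 0 then a + 1 else 0) +
    -(if 0 < b then b - 1 else if b < 0 then b + 1 else 0) : ℤ)| ≤ 1
  rw [abs_le] at h ⊢
  split_ifs <;> omega

theorem isSubsymmetric_iff {U : Ultrafilter (ℕ → ℤ)} :
    IsSubsymmetric U ↔ RTendsto' (pointwiseRel ℕ nearNeg) U U := by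
  have happrox (A : Set (ℕ → ℤ)) :
      {p | -p ∈ approx 1 A} = (pointwiseRel ℕ nearNeg).preimage A := by
    ext p
    have hnorm (q : ℕ → ℤ) : normLe (-p - q) 1 ↔ p ~[pointwiseRel ℕ nearNeg] q :=
      forall_congr' fun n => by
        rw [← abs_neg]
        simp [nearNeg, add_comm]
    simp only [approx, mem_ofPred_eq, SetRel.mem_preimage, hnorm]
  simp only [IsSubsymmetric, rtendsto'_def, happrox]
  rfl

/-- The subsymmetric cofinite ultrafilters on `FIN_{±k}`. Subsymmetry is encoded by `RTendsto'`:
the preimage of every member of `U` under the relation again belongs to `U`. -/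
def subsymmetricUltrafilters (k : ℕ) : Set (escapingUltrafilters ℕ ℤ) :=
  {U | (∀ᶠ p in U.1, IsFin k p) ∧ RTendsto' (pointwiseRel ℕ nearNeg) U.1 U.1}

namespace subsymmetricUltrafilters

theorem isClosed (k : ℕ) : IsClosed (subsymmetricUltrafilters k) :=
  IsClosed.inter
    ((ultrafilter_isClosed_basic {p | IsFin k p}).preimage continuous_subtype_val)
    ((isClosed_setOf_rtendsto' (pointwiseRel ℕ nearNeg)).preimage
      (continuous_subtype_val.prodMk continuous_subtype_val))

theorem add_mem {i j : ℕ} {U V : escapingUltrafilters ℕ ℤ} (hU : U ∈ subsymmetricUltrafilters i)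
    (hV : V ∈ subsymmetricUltrafilters j) : U + V ∈ subsymmetricUltrafilters (max i j) :=
  ⟨eventually_isFin_add hU.1 hV.1, rtendsto'_add hU.2 hV.2⟩

theorem negTEnd_mem {k : ℕ} {U : escapingUltrafilters ℕ ℤ} (hU : U ∈ subsymmetricUltrafilters k) :
    negTEnd U ∈ subsymmetricUltrafilters (k - 1) :=
  ⟨eventually_map.2 (hU.1.mono fun _ hp => hp.negT),
    rtendsto'_map (fun _ _ => pointwiseRel_comp nearNeg_negTetris) hU.2⟩

theorem negTEnd_pow_mem {k : ℕ} {U : escapingUltrafilters ℕ ℤ}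
    (hU : U ∈ subsymmetricUltrafilters k) (j : ℕ) :
    (negTEnd ^ j) U ∈ subsymmetricUltrafilters (k - j) := by
  induction j with
  | zero => exact hU
  | succ j ih =>
    rw [pow_succ', ← Nat.sub_sub]
    exact negTEnd_mem ih

theorem eq_zero_s2 {U : escapingUltrafilters ℕ ℤ} (hU : U ∈ subsymmetricUltrafilters 0) : U = 0 :=
  Subtype.ext <| Ultrafilter.coe_le_coe.1 <| le_pure_iff.2 <| hU.1.mono fun _ hp => hp.eq_zero_s2

theorem negTEnd_pow_eq_zero {k : ℕ} {U : escapingUltrafilters ℕ ℤ}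
    (hU : U ∈ subsymmetricUltrafilters k) : (negTEnd ^ k) U = 0 :=
  eq_zero_s2 (by simpa using negTEnd_pow_mem hU k)

end subsymmetricUltrafilters

/-- The sequence `0, -1, 2, -3, …, ±k, …, -3, 2, -1, 0`, continued by zeros thanks to the truncated
subtraction. -/
def zigzag (k i : ℕ) : ℤ := (-1) ^ i * (min i (2 * k - i) : ℕ)

theorem natAbs_zigzag (k i : ℕ) : (zigzag k i).natAbs = min i (2 * k - i) := by
  simp only [zigzag, Int.natAbs_mul, Int.natAbs_pow, Int.natAbs_neg, Int.natAbs_one, one_pow,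
    one_mul, Int.natAbs_natCast]

theorem sup_natAbs_zigzag (k : ℕ) :
    ((Finset.range (2 * k + 1)).sup fun i => (zigzag k i).natAbs) = k := by
  simp only [natAbs_zigzag]
  refine le_antisymm (Finset.sup_le fun i _ => by omega) ?_
  calc k = min k (2 * k - k) := by omega
    _ ≤ _ := Finset.le_sup (f := fun i => min i (2 * k - i)) (Finset.mem_range.2 (by omega))

theorem zigzag_succ_nearNeg (k i : ℕ) : zigzag k (i + 1) ~[nearNeg] zigzag k i := by
  have hdiff : zigzag k (i + 1) + zigzag k i =
      (-1) ^ i * ((min i (2 * k - i) : ℕ) - (min (i + 1) (2 * k - (i + 1)) : ℕ) : ℤ) := by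
    simp only [zigzag, pow_succ]
    ring
  change |zigzag k (i + 1) + zigzag k i| ≤ 1
  rw [hdiff, abs_mul, abs_neg_one_pow, one_mul, abs_le]
  omega

theorem subsymmetricUltrafilters.nonempty (k : ℕ) : (subsymmetricUltrafilters k).Nonempty := by
  set U := ((List.range (2 * k + 1)).map fun i => single ℕ (zigzag k i)).sum with hU
  have hinit : U = ((List.range (2 * k)).map fun i => single ℕ (zigzag k i)).sum := by
    have hlast : zigzag k (2 * k) = 0 := by simp [zigzag]
    rw [hU, List.sum_range_succ, hlast, single_zero, add_zero]
  have htail : U = ((List.range (2 * k)).map fun i => single ℕ (zigzag k (i + 1))).sum := by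
    have hfirst : zigzag k 0 = 0 := by simp [zigzag]
    rw [hU, List.sum_range_succ', hfirst, single_zero, zero_add]
  refine ⟨U, ?_, ?_⟩
  · simpa only [sup_natAbs_zigzag] using eventually_isFin_sum_single (zigzag k) (2 * k + 1)
  · have h := rtendsto'_sum_single (ι := ℕ) (r := nearNeg) (by simp [nearNeg])
      (zigzag_succ_nearNeg k) (2 * k)
    rwa [← htail, ← hinit] at h

end Gowers

/-- there is a cofinite ultrafilter `𝒰` on `FIN_{±k}` with
`𝒰 + (−T)^j 𝒰 = (−T)^j 𝒰 + 𝒰 = 𝒰` for all `j ≤ k`, which moreover is subsymmetric. -/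
theorem exists_gowers_ultrafilter (k : ℕ) (hk : 1 ≤ k) :
    ∃ 𝒰 : Ultrafilter (ℕ → ℤ), IsCofiniteUF k 𝒰 ∧
      (∀ j ≤ k, ∀ A : Set (ℕ → ℤ),
        (SumMem 𝒰 (Ultrafilter.map (negT^[j]) 𝒰) A ↔ A ∈ 𝒰) ∧
        (SumMem (Ultrafilter.map (negT^[j]) 𝒰) 𝒰 A ↔ A ∈ 𝒰)) ∧
      IsSubsymmetric 𝒰 := by
  obtain ⟨U, ⟨hfin, hsub⟩, hU⟩ := exists_absorbing_iterates
    escapingUltrafilters.continuous_add_const negTEnd (continuous_map negTetris)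
    (subsymmetricUltrafilters.isClosed k).isCompact (subsymmetricUltrafilters.nonempty k)
    (fun _ hU _ hV => by simpa using subsymmetricUltrafilters.add_mem hU hV)
    (fun _ hU _ hV => by
      simpa using subsymmetricUltrafilters.add_mem hU (subsymmetricUltrafilters.negTEnd_mem hV))
    (fun _ hU _ hV => by
      simpa using subsymmetricUltrafilters.add_mem (subsymmetricUltrafilters.negTEnd_mem hU) hV)
    (fun _ hU => subsymmetricUltrafilters.negTEnd_pow_eq_zero hU)
  refine ⟨U, isCofiniteUF_of_eventually_isFin hfin, fun j _ A => ?_, isSubsymmetric_iff.2 hsub⟩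
  rw [← coe_negTEnd_pow, sumMem_iff, sumMem_iff, (hU j).1, (hU j).2]
  exact ⟨Iff.rfl, Iff.rfl⟩
end

section
/- Let 𝒰 be a cofinite ultrafilter on FIN_{±k} satisfying 𝒰 + (−T)^j 𝒰 = (−T)^j 𝒰 + 𝒰 = 𝒰 for all j ∈ {0, …, k}. Then for every A ∈ 𝒰, the set of f ∈ FIN_{±k} such that {g ∈ FIN_{±k} : f < g and {f, g} ∪ {f + (−T)^j(g), (−T)^j(f) + g : j < k} ⊆ A} ∈ 𝒰 itself belongs to 𝒰. -/
open Function Set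

/-!
Membership in `𝒰 + 𝒱` is an iterated almost-all quantifier. Such quantifiers commute with
finite conjunctions, so the instances of `𝒰 + (-T)^j 𝒰 = (-T)^j 𝒰 + 𝒰 = 𝒰` at `A` for all `j < k`
can be imposed on `f` and `g` at once. The order relation `f < g` comes from `𝒰 + 𝒰 = 𝒰`.
-/

namespace SumMem

variable {𝒰 𝒱 : Ultrafilter (ℕ → ℤ)} {A : Set (ℕ → ℤ)} {φ : (ℕ → ℤ) → (ℕ → ℤ)}

theorem iff_eventually :
    SumMem 𝒰 𝒱 A ↔ ∀ᶠ p in 𝒰, ∀ᶠ q in 𝒱, BlockLt p q ∧ p + q ∈ A :=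
  Iff.rfl

theorem eventually_blockLt (h : SumMem 𝒰 𝒱 A) : ∀ᶠ p in 𝒰, ∀ᶠ q in 𝒱, BlockLt p q :=
  (iff_eventually.1 h).mono fun _ hp => hp.mono fun _ hq => hq.1

theorem eventually_add_mem (h : SumMem 𝒰 𝒱 A) : ∀ᶠ p in 𝒰, ∀ᶠ q in 𝒱, p + q ∈ A :=
  (iff_eventually.1 h).mono fun _ hp => hp.mono fun _ hq => hq.2

theorem eventually_add_map_mem (h : SumMem 𝒰 (𝒱.map φ) A) :
    ∀ᶠ p in 𝒰, ∀ᶠ q in 𝒱, p + φ q ∈ A :=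
  h.eventually_add_mem

theorem eventually_map_add_mem (h : SumMem (𝒰.map φ) 𝒱 A) :
    ∀ᶠ p in 𝒰, ∀ᶠ q in 𝒱, φ p + q ∈ A :=
  h.eventually_add_mem

end SumMem

theorem eventually_eventually_all_finite {α β ι : Type*} {J : Set ι} (hJ : J.Finite)
    {l : Filter α} {m : Filter β} {P : ι → α → β → Prop} :
    (∀ᶠ x in l, ∀ᶠ y in m, ∀ j ∈ J, P j x y) ↔ ∀ j ∈ J, ∀ᶠ x in l, ∀ᶠ y in m, P j x y := by
  simp only [Filter.eventually_all_finite hJ]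

theorem gowers_ultrafilter_combinatorics_general {ι : Type*} {J : Set ι} (hJ : J.Finite)
    {φ : ι → (ℕ → ℤ) → (ℕ → ℤ)} {𝒰 : Ultrafilter (ℕ → ℤ)} {A : Set (ℕ → ℤ)} (hA : A ∈ 𝒰)
    (hsum : SumMem 𝒰 𝒰 A)
    (hφ : ∀ j ∈ J, SumMem 𝒰 (𝒰.map (φ j)) A ∧ SumMem (𝒰.map (φ j)) 𝒰 A) :
    {f | {g | BlockLt f g ∧ f ∈ A ∧ g ∈ A ∧
      ∀ j ∈ J, f + φ j g ∈ A ∧ φ j f + g ∈ A} ∈ 𝒰} ∈ 𝒰 := by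
  have hright : ∀ᶠ f in 𝒰, ∀ᶠ g in 𝒰, ∀ j ∈ J, f + φ j g ∈ A :=
    (eventually_eventually_all_finite hJ).2 fun j hj => (hφ j hj).1.eventually_add_map_mem
  have hleft : ∀ᶠ f in 𝒰, ∀ᶠ g in 𝒰, ∀ j ∈ J, φ j f + g ∈ A :=
    (eventually_eventually_all_finite hJ).2 fun j hj => (hφ j hj).2.eventually_map_add_mem
  filter_upwards [hA, hsum.eventually_blockLt, hright, hleft] with f hfA hlt hr hl
  filter_upwards [hA, hlt, hr, hl] with g hgA hfg hr hl
  exact ⟨hfg, hfA, hgA, fun j hj => ⟨hr j hj, hl j hj⟩⟩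

/-- if `𝒰` is a cofinite ultrafilter on `FIN_{±k}` with
`𝒰 + (−T)^j 𝒰 = (−T)^j 𝒰 + 𝒰 = 𝒰` for all `j ≤ k`, then for every `A ∈ 𝒰`,
`𝒰`-many `f` satisfy that `𝒰`-many `g > f` have
`{f, g} ∪ {f + (−T)^j g, (−T)^j f + g : j < k} ⊆ A`. -/
theorem gowers_ultrafilter_combinatorics (k : ℕ) (hk : 1 ≤ k) (𝒰 : Ultrafilter (ℕ → ℤ))
    (hcof : IsCofiniteUF k 𝒰)
    (hidem : ∀ j ≤ k, ∀ A : Set (ℕ → ℤ),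
      (SumMem 𝒰 (Ultrafilter.map (negT^[j]) 𝒰) A ↔ A ∈ 𝒰) ∧
      (SumMem (Ultrafilter.map (negT^[j]) 𝒰) 𝒰 A ↔ A ∈ 𝒰))
    (A : Set (ℕ → ℤ)) (hA : A ∈ 𝒰) :
    {f | {g | BlockLt f g ∧ f ∈ A ∧ g ∈ A ∧
      ∀ j < k, f + negT^[j] g ∈ A ∧ negT^[j] f + g ∈ A} ∈ 𝒰} ∈ 𝒰 :=
  gowers_ultrafilter_combinatorics_general (finite_Iio k) hA ((hidem 0 k.zero_le A).1.2 hA)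
    fun j (hj : j < k) => (hidem j hj.le A).imp (·.2 hA) (·.2 hA)
end
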